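/- arXiv:1503.01151 — 3 statements merged into one kernel-verified Lean document; each statement's English description precedes it below -/
import Mathlib

section
/- If (A, ι) is a 𝒦-algebra, then the A-relative commutant C(A, ι) is a nondegenerate C*-subalgebra of the multiplier algebra M(A), i.e. C(A, ι)·A is dense in A. -/
/-!
Write `E i j = ι (u i j)` for the images in `M(A)` of the matrix units of `𝒦`.

That the relative commutant is a closed star subalgebra is formal: `A` is a closed two-sided
star ideal of `M(A)`, and the two defining conditions are closed, linear, and compatible with
products and adjoints.

For nondegeneracy, enough elements of the relative commutant must be produced. Every `b : A` can be
amplified along the diagonal to the multiplier `c = ∑ i, E i 0 * b * E 0 i`, the sum being taken in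
the strict topology (`exists_amplification`). The finite partial sums are bounded by `‖b‖`
(`norm_amp_le`), and applied to an element `E k l a` they are eventually constant; since `ι` is
nondegenerate, such elements span a dense subspace of `A` (`topologicalClosure_span_eq_top`), so
the partial sums converge pointwise, and Banach-Steinhaus makes the limit a multiplier
(`exists_strict_limit`). By construction `E k l * c = E k 0 * b * E 0 l = c * E k l`, which lies in
`A`; by density of the span of the matrix units, `c` lies in the relative commutant.

Finally, for `y = E 0 j d`, the vector `c * E i j d` equals `E i 0 (b * y)`. Letting `b` run
through an approximate unit of `A`, this approximates `E i 0 y = E i j d`, and the elements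
`E i j d` span a dense subspace of `A`.
-/

open scoped MultiplierAlgebra

noncomputable section

/-! ## Framework

`𝓜(ℂ, A)` is the multiplier algebra `M(A)` of a (non-unital) C⋆-algebra `A`
(Mathlib's `DoubleCentralizer`), and `(a : 𝓜(ℂ, A))` is the canonical image of `a : A`
in it. -/

/-- A system of matrix units `{u i j}` (indexed by `ℕ`) in a non-unital C⋆-algebra `K`,
whose linear span is dense.  A C⋆-algebra carrying such a system is precisely (i.e., is
⋆-isomorphic to) the C⋆-algebra `𝒦` of compact operators on a separable
infinite-dimensional Hilbert space. -/
structure MatrixUnits (K : Type*) [NonUnitalCStarAlgebra K] where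
  u : ℕ → ℕ → K
  u_ne_zero : ∀ i j, u i j ≠ 0
  u_mul : ∀ i j k l, u i j * u k l = if j = k then u i l else 0
  star_u : ∀ i j, star (u i j) = u j i
  dense_span : Dense (Submodule.span ℂ (Set.range fun p : ℕ × ℕ => u p.1 p.2) : Set K)

/-- `K` is (a copy of) the C⋆-algebra `𝒦` of compact operators on a separable
infinite-dimensional Hilbert space. -/
def IsCompactOperatorsAlgebra (K : Type*) [NonUnitalCStarAlgebra K] : Prop :=
  Nonempty (MatrixUnits K)

/-- A homomorphism `φ : A → M(B)` is *nondegenerate* if `φ(A)·B` is dense in `B`. -/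
def Nondegenerate {A B : Type*} [NonUnitalCStarAlgebra A] [NonUnitalCStarAlgebra B]
    (φ : A →⋆ₙₐ[ℂ] 𝓜(ℂ, B)) : Prop :=
  ∀ b : B, (b : 𝓜(ℂ, B)) ∈
    closure (Submodule.span ℂ {x : 𝓜(ℂ, B) | ∃ (a : A) (c : B), x = φ a * c} : Set 𝓜(ℂ, B))

/-- The `A`-relative commutant `C(A, ι) = {a ∈ M(A) : ι(k)·a = a·ι(k) ∈ A for all k ∈ K}`
of a `K`-algebra `(A, ι)`. -/
def relComm {K A : Type*} [NonUnitalCStarAlgebra K] [NonUnitalCStarAlgebra A]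
    (ι : K →⋆ₙₐ[ℂ] 𝓜(ℂ, A)) : Set 𝓜(ℂ, A) :=
  {a | ∀ k : K, ι k * a = a * ι k ∧ a * ι k ∈ Set.range ((↑) : A → 𝓜(ℂ, A))}

open Filter Topology

/-! ### Multipliers and strict limits -/

section

variable {A : Type*} [NonUnitalCStarAlgebra A]

theorem eq_of_forall_mul_left_eq {x y : A} (h : ∀ c : A, c * x = c * y) : x = y := by
  have h1 : star (x - y) * (x - y) = 0 := by rw [mul_sub, h, sub_self]
  exact sub_eq_zero.1 (CStarRing.star_mul_self_eq_zero_iff _ |>.1 h1)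

theorem fst_mul (x : 𝓜(ℂ, A)) (a b : A) : x.fst (a * b) = x.fst a * b :=
  eq_of_forall_mul_left_eq fun c => by
    rw [← x.central, ← mul_assoc, x.central, mul_assoc]

theorem mul_coe (x : 𝓜(ℂ, A)) (a : A) : x * (a : 𝓜(ℂ, A)) = (x.fst a : A) := by
  refine DoubleCentralizer.ext _ _ _ _ (Prod.ext ?_ ?_)
  · ext b
    exact fst_mul x a b
  · ext b
    exact x.central b a

theorem norm_coe (a : A) : ‖(a : 𝓜(ℂ, A))‖ = ‖a‖ := by
  rw [← DoubleCentralizer.norm_fst, DoubleCentralizer.coe_fst,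
    ContinuousLinearMap.opNorm_mul_apply]

theorem isometry_coe : Isometry (DoubleCentralizer.coeHom : A →⋆ₙₐ[ℂ] 𝓜(ℂ, A)) :=
  AddMonoidHomClass.isometry_of_norm _ fun a => norm_coe a

theorem isClosed_range_coe : IsClosed (Set.range ((↑) : A → 𝓜(ℂ, A))) :=
  isometry_coe.isClosedEmbedding.isClosed_range

/-- A multiplier is determined by its left action, as `‖x‖ = ‖x.fst‖`. -/
theorem ext_fst {x y : 𝓜(ℂ, A)} (h : ∀ a, x.fst a = y.fst a) : x = y := by
  rw [← sub_eq_zero, ← norm_eq_zero, ← DoubleCentralizer.norm_fst, norm_eq_zero]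
  ext a
  exact sub_eq_zero.2 (h a)

theorem snd_eq_star (x : 𝓜(ℂ, A)) (a : A) : x.snd a = star ((star x).fst (star a)) := by
  simp

/-- Every C⋆-algebra has approximate factorizations `y ≈ v * y`, by an approximate unit. -/
theorem mem_closure_range_mul (y : A) : y ∈ closure (Set.range fun v : A => v * y) := by
  let _ := CStarAlgebra.spectralOrder A
  have := CStarAlgebra.spectralOrderedRing A
  exact mem_closure_of_tendsto
    ((CStarAlgebra.increasingApproximateUnit A).tendsto_mul_right y)
    (Eventually.of_forall fun v => ⟨v, rfl⟩)

/-- Pointwise Cauchy sequences of multipliers have a strict limit, whose two components are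
bounded by the Banach-Steinhaus theorem; only convergence of the left actions is recorded, since
they determine a multiplier. -/
theorem exists_strict_limit (T : ℕ → 𝓜(ℂ, A)) (h1 : ∀ a, CauchySeq fun n => (T n).fst a)
    (h2 : ∀ a, CauchySeq fun n => (T n).snd a) :
    ∃ x : 𝓜(ℂ, A), ∀ a, Tendsto (fun n => (T n).fst a) atTop (𝓝 (x.fst a)) := by
  choose L hL using fun a => cauchySeq_tendsto_of_complete (h1 a)
  choose R hR using fun a => cauchySeq_tendsto_of_complete (h2 a)
  refine ⟨{ fst := continuousLinearMapOfTendsto (fun n => (T n).fst) (tendsto_pi_nhds.2 hL)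
            snd := continuousLinearMapOfTendsto (fun n => (T n).snd) (tendsto_pi_nhds.2 hR)
            central := fun a b => ?_ }, hL⟩
  refine tendsto_nhds_unique ((hR a).mul_const b) ?_
  simp_rw [(T _).central]
  exact (hL b).const_mul a

/-- A bounded sequence of operators that is eventually constant at each point of a dense set is
pointwise Cauchy. -/
theorem cauchySeq_of_dense {T : ℕ → A →L[ℂ] A} {C : ℝ} (hC : ∀ n, ‖T n‖ ≤ C) {D : Set A}
    (hD : Dense D) (hT : ∀ d ∈ D, ∃ z, ∀ᶠ n in atTop, T n d = z) (a : A) :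
    CauchySeq fun n => T n a := by
  have hC0 : 0 ≤ C := (norm_nonneg _).trans (hC 0)
  refine Metric.cauchySeq_iff'.2 fun ε hε => ?_
  obtain ⟨d, hd, hda⟩ := Metric.dense_iff.1 hD a (ε / (2 * (C + 1))) (by positivity)
  obtain ⟨z, hz⟩ := hT d hda
  obtain ⟨N, hN⟩ := eventually_atTop.1 hz
  have key : ∀ n ≥ N, dist (T n a) z < ε / 2 := fun n hn => by
    rw [← hN n hn, dist_eq_norm, ← map_sub]
    have h1 : ‖a - d‖ < ε / (2 * (C + 1)) := by
      rw [← dist_eq_norm, dist_comm]; exact hd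
    calc ‖T n (a - d)‖ ≤ C * ‖a - d‖ := (T n).le_of_opNorm_le (hC n) _
      _ ≤ (C + 1) * ‖a - d‖ := by gcongr; linarith
      _ < (C + 1) * (ε / (2 * (C + 1))) := by gcongr
      _ = ε / 2 := by field_simp
  refine ⟨N, fun n hn => ?_⟩
  linarith [dist_triangle_right (T n a) (T N a) z, key n hn, key N le_rfl]

end

/-! ### Finite amplifications along matrix units -/

section

variable {M : Type*} [CStarAlgebra M]

/-- The finite amplification `∑ i ∈ s, E i 0 * b * E 0 i` of `b` along the matrix units `E`. -/
def amp (E : ℕ → ℕ → M) (b : M) (s : Finset ℕ) : M := ∑ i ∈ s, E i 0 * b * E 0 i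

variable {E : ℕ → ℕ → M}

theorem star_amp (hs : ∀ i j, star (E i j) = E j i) (b : M) (s : Finset ℕ) :
    star (amp E b s) = amp E (star b) s := by
  simp [amp, star_sum, hs, mul_assoc]

theorem amp_mul (hE : ∀ i j k l, E i j * E k l = if j = k then E i l else 0) (b : M)
    (s : Finset ℕ) (k l : ℕ) (hk : k ∈ s) : amp E b s * E k l = E k 0 * b * E 0 l := by
  simp [amp, Finset.sum_mul, mul_assoc, hE, hk]

theorem mul_amp (hE : ∀ i j k l, E i j * E k l = if j = k then E i l else 0) (b : M)
    (s : Finset ℕ) (k l : ℕ) (hl : l ∈ s) : E k l * amp E b s = E k 0 * b * E 0 l := by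
  simp [amp, Finset.mul_sum, ← mul_assoc, hE, hl]

/-- Amplification is contractive: since the `E i 0 * b` have orthogonal ranges,
`star S * S = ∑ E i 0 * (star b * E 0 0 * b) * E 0 i ≤ ‖b‖ ^ 2 • ∑ E i i`, and `∑ E i i` is a
projection. -/
theorem norm_amp_le (hE : ∀ i j k l, E i j * E k l = if j = k then E i l else 0)
    (hs : ∀ i j, star (E i j) = E j i) (b : M) (s : Finset ℕ) : ‖amp E b s‖ ≤ ‖b‖ := by
  let _ := CStarAlgebra.spectralOrder M
  have := CStarAlgebra.spectralOrderedRing M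
  have proj : ∀ p : M, star p * p = p → ‖p‖ ≤ 1 := fun p hp => by
    have := CStarRing.norm_star_mul_self (x := p)
    rw [hp] at this
    nlinarith [norm_nonneg p]
  have hp : ‖∑ i ∈ s, E i i‖ ≤ 1 := proj _ <| by
    simp +contextual [star_sum, hs, Finset.sum_mul_sum, hE]
  have h0 : ‖E 0 0‖ ≤ 1 := proj _ <| by simp [hs, hE]
  set x : M := star b * E 0 0 * b with hx
  have hxsa : IsSelfAdjoint x := by
    simp [IsSelfAdjoint, hx, hs, mul_assoc]
  have hxn : ‖x‖ ≤ ‖b‖ ^ 2 := by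
    calc ‖x‖ ≤ ‖star b‖ * ‖E 0 0‖ * ‖b‖ := norm_mul₃_le
      _ ≤ ‖b‖ * 1 * ‖b‖ := by rw [norm_star]; gcongr
      _ = ‖b‖ ^ 2 := by ring
  have hSS : star (amp E b s) * amp E b s = ∑ i ∈ s, E i 0 * x * E 0 i := by
    rw [star_amp hs]
    nth_rw 1 [amp]
    rw [Finset.sum_mul]
    refine Finset.sum_congr rfl fun i hi => ?_
    rw [mul_assoc (E i 0 * star b), mul_amp hE b s 0 i hi, hx]
    simp only [mul_assoc]
  have hle : star (amp E b s) * amp E b s ≤ ‖x‖ • ∑ i ∈ s, E i i := by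
    rw [hSS, Finset.smul_sum]
    refine Finset.sum_le_sum fun i _ => ?_
    have := CStarAlgebra.star_left_conjugate_le_norm_smul (a := E 0 i) hxsa
    simpa [hs, hE] using this
  have h3 := CStarAlgebra.norm_le_norm_of_nonneg_of_le (star_mul_self_nonneg _) hle
  rw [CStarRing.norm_star_mul_self, norm_smul, norm_norm] at h3
  have h4 : ‖x‖ * ‖∑ i ∈ s, E i i‖ ≤ ‖b‖ ^ 2 * 1 := by gcongr
  exact abs_le_of_sq_le_sq' (by nlinarith) (norm_nonneg b) |>.2

end

/-! ### The relative commutant -/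

section

variable {K A : Type*} [NonUnitalCStarAlgebra K] [NonUnitalCStarAlgebra A]
  (ι : K →⋆ₙₐ[ℂ] 𝓜(ℂ, A))

theorem continuous_hom : Continuous ι :=
  AddMonoidHomClass.continuous_of_bound ι 1 fun k => by
    simpa using NonUnitalStarAlgHom.norm_apply_le ι k

theorem isClosed_relComm : IsClosed (relComm ι) := by
  simp only [relComm, Set.ofPred_forall]
  refine isClosed_iInter fun k => ?_
  exact (isClosed_eq (by fun_prop) (by fun_prop)).inter
    (isClosed_range_coe.preimage (continuous_mul_const (ι k)))

theorem star_coe (a : A) : star (a : 𝓜(ℂ, A)) = (star a : A) :=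
  (map_star (DoubleCentralizer.coeHom : A →⋆ₙₐ[ℂ] 𝓜(ℂ, A)) a).symm

/-- The relative commutant as a star subalgebra of the multiplier algebra. -/
def relCommSubalgebra : NonUnitalStarSubalgebra ℂ 𝓜(ℂ, A) where
  carrier := relComm ι
  zero_mem' k := ⟨by simp, 0, by
    rw [zero_mul]; exact map_zero (DoubleCentralizer.coeHom : A →⋆ₙₐ[ℂ] 𝓜(ℂ, A))⟩
  add_mem' {x y} hx hy k := by
    obtain ⟨hx1, a, ha⟩ := hx k
    obtain ⟨hy1, b, hb⟩ := hy k
    refine ⟨by rw [mul_add, add_mul, hx1, hy1], a + b, ?_⟩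
    rw [add_mul, ← ha, ← hb]
    exact map_add (DoubleCentralizer.coeHom : A →⋆ₙₐ[ℂ] 𝓜(ℂ, A)) a b
  smul_mem' c x hx k := by
    obtain ⟨hx1, a, ha⟩ := hx k
    refine ⟨by rw [mul_smul_comm, smul_mul_assoc, hx1], c • a, ?_⟩
    rw [smul_mul_assoc, ← ha]
    exact map_smul (DoubleCentralizer.coeHom : A →⋆ₙₐ[ℂ] 𝓜(ℂ, A)) c a
  mul_mem' {x y} hx hy k := by
    obtain ⟨hx1, -⟩ := hx k
    obtain ⟨hy1, b, hb⟩ := hy k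
    refine ⟨by rw [← mul_assoc, hx1, mul_assoc, hy1, mul_assoc], x.fst b, ?_⟩
    rw [← mul_coe, hb, mul_assoc]
  star_mem' {x} hx k := by
    obtain ⟨hx1, a, ha⟩ := hx (star k)
    have h1 : ι k * star x = star x * ι k := by
      simpa [map_star] using (congrArg star hx1).symm
    refine ⟨h1, star a, ?_⟩
    rw [← star_coe, ha, ← h1, star_mul, map_star, star_star]

variable {ι}

/-- The elements `ι (u i j) c` span a dense subspace of `A`. -/
theorem topologicalClosure_span_eq_top (U : MatrixUnits K) (hι : Nondegenerate ι) :
    (Submodule.span ℂ {x : A | ∃ i j c, x = (ι (U.u i j)).fst c}).topologicalClosure = ⊤ := by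
  set D := (Submodule.span ℂ {x : A | ∃ i j c, x = (ι (U.u i j)).fst c}).topologicalClosure with hD
  have hDc : IsClosed (D : Set A) := Submodule.isClosed_topologicalClosure _
  have hmem : ∀ (k : K) (c : A), (ι k).fst c ∈ D := by
    intro k c
    let f : K →ₗ[ℂ] A :=
      { toFun := fun k => (ι k).fst c
        map_add' := fun x y => by rw [map_add]; rfl
        map_smul' := fun r x => by rw [map_smul]; rfl }
    have hf : Continuous f := AddMonoidHomClass.continuous_of_bound f ‖c‖ fun k => by
      calc ‖(ι k).fst c‖ ≤ ‖(ι k).fst‖ * ‖c‖ := (ι k).fst.le_opNorm c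
        _ = ‖ι k‖ * ‖c‖ := by rw [DoubleCentralizer.norm_fst]
        _ ≤ ‖k‖ * ‖c‖ := by gcongr; exact NonUnitalStarAlgHom.norm_apply_le ι k
        _ = ‖c‖ * ‖k‖ := mul_comm _ _
    have hle : Submodule.span ℂ (Set.range fun p : ℕ × ℕ => U.u p.1 p.2) ≤ D.comap f :=
      Submodule.span_le.2 <| by
        rintro _ ⟨p, rfl⟩
        exact Submodule.le_topologicalClosure _ (Submodule.subset_span ⟨p.1, p.2, c, rfl⟩)
    exact closure_minimal hle (hDc.preimage hf) (U.dense_span k)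
  have hDM : IsClosed ((D.map ((DoubleCentralizer.coeHom : A →⋆ₙₐ[ℂ] 𝓜(ℂ, A)) : A →ₗ[ℂ] 𝓜(ℂ, A)) :
      Submodule ℂ 𝓜(ℂ, A)) : Set 𝓜(ℂ, A)) := by
    rw [Submodule.map_coe]
    exact isometry_coe.isClosedEmbedding.isClosedMap _ hDc
  rw [eq_top_iff]
  intro a _
  have h := closure_minimal (Submodule.span_le.2 ?_) hDM (hι a)
  · obtain ⟨d, hd, hda⟩ := h
    exact isometry_coe.injective hda ▸ hd
  · rintro _ ⟨k, c, rfl⟩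
    exact ⟨_, hmem k c, (mul_coe _ _).symm⟩

/-- For `b : A` the strict limit `c = ∑ i, E i 0 * b * E 0 i` of the amplifications of `b`
exists, where `E i j = ι (u i j)`; it lies in the relative commutant, and `c * E i j` is computed
by a single summand. -/
theorem exists_amplification (U : MatrixUnits K) (hι : Nondegenerate ι) (b : A) :
    ∃ c ∈ relComm ι, ∀ i j, c * ι (U.u i j) = ι (U.u i 0) * b * ι (U.u 0 j) := by
  let E : ℕ → ℕ → 𝓜(ℂ, A) := fun i j => ι (U.u i j)
  have hE : ∀ i j k l, E i j * E k l = if j = k then E i l else 0 := fun i j k l => by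
    simp only [E, ← map_mul, U.u_mul]
    split_ifs <;> simp
  have hs : ∀ i j, star (E i j) = E j i := fun i j => by
    simp only [E, ← map_star, U.star_u]
  have hdense := Submodule.dense_iff_topologicalClosure_eq_top.2
    (topologicalClosure_span_eq_top U hι)
  have cauchy : ∀ (m : 𝓜(ℂ, A)) (a : A),
      CauchySeq fun n => (amp E m (Finset.range n)).fst a := by
    intro m a
    refine cauchySeq_of_dense (T := fun n => (amp E m (Finset.range n)).fst) (C := ‖m‖)
      (fun n => ?_) hdense (fun d hd => ?_) a
    · rw [DoubleCentralizer.norm_fst]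
      exact norm_amp_le hE hs m _
    · induction hd using Submodule.span_induction with
      | mem x hx =>
        obtain ⟨i, j, c, rfl⟩ := hx
        refine ⟨(E i 0 * m * E 0 j).fst c, ?_⟩
        filter_upwards [eventually_gt_atTop i] with n hn
        rw [← amp_mul hE m (Finset.range n) i j (Finset.mem_range.2 hn)]
        rfl
      | zero => exact ⟨0, by simp⟩
      | add x y _ _ hx hy =>
        obtain ⟨z, hz⟩ := hx
        obtain ⟨w, hw⟩ := hy
        refine ⟨z + w, ?_⟩
        filter_upwards [hz, hw] with n h1 h2
        rw [map_add, h1, h2]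
      | smul r x _ hx =>
        obtain ⟨z, hz⟩ := hx
        refine ⟨r • z, ?_⟩
        filter_upwards [hz] with n h1
        rw [map_smul, h1]
  obtain ⟨c, hc⟩ := exists_strict_limit (fun n => amp E b (Finset.range n)) (cauchy b) fun a => by
    simp_rw [snd_eq_star, star_amp hs]
    exact (starₗᵢ ℂ : A ≃ₗᵢ⋆[ℂ] A).isometry.uniformContinuous.comp_cauchySeq (cauchy _ _)
  have hr : ∀ i j, c * E i j = E i 0 * b * E 0 j := fun i j => ext_fst fun a => by
    refine tendsto_nhds_unique (hc ((E i j).fst a)) (tendsto_const_nhds.congr' ?_)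
    filter_upwards [eventually_gt_atTop i] with n hn
    rw [← amp_mul hE b (Finset.range n) i j (Finset.mem_range.2 hn)]
    rfl
  have hl : ∀ i j, E i j * c = E i 0 * b * E 0 j := fun i j => ext_fst fun a => by
    refine tendsto_nhds_unique (((E i j).fst.continuous.tendsto _).comp (hc a))
      (tendsto_const_nhds.congr' ?_)
    filter_upwards [eventually_gt_atTop j] with n hn
    rw [← mul_amp hE b (Finset.range n) i j (Finset.mem_range.2 hn)]
    rfl
  refine ⟨c, fun k => ?_, hr⟩
  -- The elements `k` for which both conditions hold form a closed subspace of `K`.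
  let P : Submodule ℂ K :=
    { carrier := {k | ι k * c = c * ι k ∧ c * ι k ∈ Set.range ((↑) : A → 𝓜(ℂ, A))}
      zero_mem' := ⟨by simp, 0, by
        rw [map_zero, mul_zero]; exact map_zero (DoubleCentralizer.coeHom : A →⋆ₙₐ[ℂ] 𝓜(ℂ, A))⟩
      add_mem' := by
        rintro x y ⟨hx, a, ha⟩ ⟨hy, a', ha'⟩
        refine ⟨by rw [map_add, add_mul, mul_add, hx, hy], a + a', ?_⟩
        rw [map_add, mul_add, ← ha, ← ha']
        exact map_add (DoubleCentralizer.coeHom : A →⋆ₙₐ[ℂ] 𝓜(ℂ, A)) a a'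
      smul_mem' := by
        rintro r x ⟨hx, a, ha⟩
        refine ⟨by rw [map_smul, mul_smul_comm, smul_mul_assoc, hx], r • a, ?_⟩
        rw [map_smul, mul_smul_comm, ← ha]
        exact map_smul (DoubleCentralizer.coeHom : A →⋆ₙₐ[ℂ] 𝓜(ℂ, A)) r a }
  have hι' := continuous_hom ι
  have hP : IsClosed (P : Set K) :=
    (isClosed_eq (hι'.mul continuous_const) (continuous_const.mul hι')).inter
      (isClosed_range_coe.preimage (continuous_const.mul hι'))
  refine closure_minimal (Submodule.span_le.2 ?_ : _ ≤ P) hP (U.dense_span k)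
  rintro _ ⟨⟨i, j⟩, rfl⟩
  refine ⟨(hl i j).trans (hr i j).symm, star ((E j 0).fst (star ((E i 0).fst b))), ?_⟩
  refine Eq.trans ?_ (hr i j).symm
  rw [← star_coe, ← mul_coe, star_mul, star_coe, star_star, ← mul_coe, hs]

end

/-- If `(A, ι)` is a `𝒦`-algebra, then the `A`-relative commutant
`C(A, ι)` is a (closed) C⋆-subalgebra of `M(A)` which is nondegenerate in the sense that
`C(A, ι)·A` is dense in `A`. -/
theorem relComm_isCStarSubalgebra_and_nondegenerate
    {K A : Type*} [NonUnitalCStarAlgebra K] [NonUnitalCStarAlgebra A]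
    (hK : IsCompactOperatorsAlgebra K)
    (ι : K →⋆ₙₐ[ℂ] 𝓜(ℂ, A)) (hι : Nondegenerate ι) :
    (∃ S : NonUnitalStarSubalgebra ℂ 𝓜(ℂ, A),
        (S : Set 𝓜(ℂ, A)) = relComm ι ∧ IsClosed (relComm ι)) ∧
      ∀ a : A, (a : 𝓜(ℂ, A)) ∈
        closure (Submodule.span ℂ
          {x : 𝓜(ℂ, A) | ∃ c ∈ relComm ι, ∃ b : A, x = c * b} : Set 𝓜(ℂ, A)) := by
  obtain ⟨U⟩ := hK
  refine ⟨⟨relCommSubalgebra ι, rfl, isClosed_relComm ι⟩, fun a => ?_⟩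
  set T : Submodule ℂ 𝓜(ℂ, A) :=
    Submodule.span ℂ {x : 𝓜(ℂ, A) | ∃ c ∈ relComm ι, ∃ b : A, x = c * b} with hT
  let J : A →⋆ₙₐ[ℂ] 𝓜(ℂ, A) := DoubleCentralizer.coeHom
  have hJ : Continuous J := isometry_coe.continuous
  have hTc : IsClosed (T.topologicalClosure : Set 𝓜(ℂ, A)) := T.isClosed_topologicalClosure
  let W : Submodule ℂ A := T.topologicalClosure.comap (J : A →ₗ[ℂ] 𝓜(ℂ, A))
  have hW : IsClosed (W : Set A) := hTc.preimage hJ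
  suffices h : (⊤ : Submodule ℂ A) ≤ W from h (Submodule.mem_top (x := a))
  rw [← topologicalClosure_span_eq_top U hι]
  refine Submodule.topologicalClosure_minimal _ (Submodule.span_le.2 ?_) hW
  rintro _ ⟨i, j, d, rfl⟩
  -- With `y = E 0 j d`, the target `E i j d` is `E i 0 y`, and `y` is a limit of products `v * y`.
  set y : A := (ι (U.u 0 j)).fst d with hy
  have hfac : (ι (U.u i j)).fst d = (ι (U.u i 0)).fst y := by
    rw [← show U.u i 0 * U.u 0 j = U.u i j by simp [U.u_mul], map_mul]
    rfl
  rw [hfac]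
  refine closure_minimal (s := Set.range fun v : A => v * y) ?_
    (hW.preimage (ι (U.u i 0)).fst.continuous) (mem_closure_range_mul y)
  rintro _ ⟨v, rfl⟩
  -- `E i 0 (v * y) = c * E i j d`, where `c` is the amplification of `v`.
  obtain ⟨c, hc, hcE⟩ := exists_amplification U hι v
  refine T.le_topologicalClosure (Submodule.subset_span
    ⟨c, hc, (ι (U.u i j)).fst d, ?_⟩)
  rw [← mul_coe, ← mul_assoc, hcE, mul_assoc, mul_coe (ι (U.u 0 j)), ← hy, mul_assoc,
    mul_coe (v : 𝓜(ℂ, A)), mul_coe]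
  rfl
end
end

section
/- If (A, ι) is a 𝒦-algebra, then there is a C*-isomorphism θ: C(A, ι) ⊗ 𝒦 → A determined on elementary tensors by θ(a ⊗ k) = a·ι(k). -/
/-!
Write `e i j` for the matrix units of `K` and `E i j = ι (e i j)`. The maps `c ↦ c ⊗ e i j` into
`T` and `c ↦ j c * E i j` into `A` are both *matrix systems*: families `f i j` of linear maps with
the multiplication and adjoint rules of matrix units, each injective. Two facts give the theorem.

* A matrix system `f` induces injective ⋆-homomorphisms `Mₙ(C₀) → S`, `X ↦ ∑ f i j (X i j)`. An
  injective ⋆-homomorphism of C⋆-algebras is isometric, so `‖∑ f i j (X i j)‖` is the C⋆-norm of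
  `X` and does not depend on the system. Hence any two matrix systems over the same algebra whose
  spans are dense have isomorphic targets (`IsMatrixSystem.exists_starAlgEquiv`).

* The elements `j c * E i j` span a dense subspace of `A` (`denseRange_commSystem`). By
  nondegeneracy the projections `P n = ∑_{i < n} E i i` converge strictly to `1`, so it suffices
  to write each `E l l * a * E m m` as `c * E l m` with `c` in the relative commutant. Such a `c` is
  the strict limit of `∑_{k < n} E k l * a * E m k` (`IsMultiplierMatrixUnits.exists_amp`). The
  partial sums are bounded because `x ↦ ∑_{k < n} E k 0 * x * E 0 k` is a ⋆-homomorphism on the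
  corner `E 0 0 * M(A) * E 0 0`, and they are compatible with the projections `P n`, which gives
  the Cauchy property.
-/

open scoped MultiplierAlgebra

noncomputable section

/-- A witness that `T` is (a copy of) the spatial tensor product `B ⊗ K`: a bilinear,
multiplicative, star-preserving map on elementary tensors whose range has dense linear span
and which satisfies `‖b ⊗ k‖ = ‖b‖‖k‖`.  (Since the compact operators `𝒦` are nuclear and
simple, for `K = 𝒦` such data identifies `T` with the minimal tensor product `B ⊗ 𝒦`.) -/
structure CStarTensor (B K T : Type*) [NonUnitalCStarAlgebra B] [NonUnitalCStarAlgebra K]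
    [NonUnitalCStarAlgebra T] where
  tmul : B → K → T
  add_tmul : ∀ b b' k, tmul (b + b') k = tmul b k + tmul b' k
  tmul_add : ∀ b k k', tmul b (k + k') = tmul b k + tmul b k'
  smul_tmul : ∀ (c : ℂ) b k, tmul (c • b) k = c • tmul b k
  tmul_smul : ∀ (c : ℂ) b k, tmul b (c • k) = c • tmul b k
  tmul_mul_tmul : ∀ b b' k k', tmul b k * tmul b' k' = tmul (b * b') (k * k')
  star_tmul : ∀ b k, star (tmul b k) = tmul (star b) (star k)
  norm_tmul : ∀ b k, ‖tmul b k‖ = ‖b‖ * ‖k‖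
  dense_span : Dense (Submodule.span ℂ {x : T | ∃ b k, x = tmul b k} : Set T)

/-- `ι` is the canonical nondegenerate homomorphism `1 ⊗ id : K → M(B ⊗ K)`, characterized
by `(1 ⊗ k)·(b ⊗ k') = b ⊗ (k·k')` and `(b ⊗ k')·(1 ⊗ k) = b ⊗ (k'·k)`. -/
def IsOneTensorId {B K T : Type*} [NonUnitalCStarAlgebra B] [NonUnitalCStarAlgebra K]
    [NonUnitalCStarAlgebra T] (τ : CStarTensor B K T) (ι : K →⋆ₙₐ[ℂ] 𝓜(ℂ, T)) : Prop :=
  ∀ (k : K) (b : B) (k' : K),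
    ι k * (τ.tmul b k' : 𝓜(ℂ, T)) = (τ.tmul b (k * k') : 𝓜(ℂ, T)) ∧
      (τ.tmul b k' : 𝓜(ℂ, T)) * ι k = (τ.tmul b (k' * k) : 𝓜(ℂ, T))


/-! ### Matrix systems -/

/-- A system of injective linear maps `f i j : B → S` with the multiplication and adjoint rules of
the maps `b ↦ b ⊗ e i j` into `B ⊗ 𝒦`, where `e i j` are matrix units. -/
structure IsMatrixSystem {B S : Type*} [NonUnitalCStarAlgebra B] [NonUnitalCStarAlgebra S]
    (f : ℕ → ℕ → B →ₗ[ℂ] S) : Prop where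
  mul : ∀ i j k l b c, f i j b * f k l c = if j = k then f i l (b * c) else 0
  star_eq : ∀ i j b, star (f i j b) = f j i (star b)
  inj : ∀ i j b, f i j b = 0 → b = 0

namespace IsMatrixSystem

variable {B S S' : Type*} [NonUnitalCStarAlgebra B] [NonUnitalCStarAlgebra S]
  [NonUnitalCStarAlgebra S'] {f : ℕ → ℕ → B →ₗ[ℂ] S} {f' : ℕ → ℕ → B →ₗ[ℂ] S'}

/-- The homomorphism `Mₙ(B) → S`, `X ↦ ∑ f i j (X i j)`. -/
def matHom (hf : IsMatrixSystem f) (n : ℕ) : CStarMatrix (Fin n) (Fin n) B →⋆ₙₐ[ℂ] S where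
  toFun X := ∑ i : Fin n, ∑ j : Fin n, f i j (X i j)
  map_smul' c X := by simp [Finset.smul_sum]
  map_zero' := by simp
  map_add' X Y := by simp [Finset.sum_add_distrib]
  map_mul' X Y := by
    simp only [Finset.sum_mul_sum, hf.mul, CStarMatrix.mul_apply, map_sum, Fin.val_inj]
    refine Finset.sum_congr rfl fun i _ => ?_
    rw [Finset.sum_comm]
    refine Finset.sum_congr rfl fun k _ => ?_
    rw [Finset.sum_comm]
    simp
  map_star' X := by
    simp only [star_sum, hf.star_eq, CStarMatrix.star_apply]
    exact Finset.sum_comm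

lemma matHom_apply (hf : IsMatrixSystem f) (n : ℕ) (X : CStarMatrix (Fin n) (Fin n) B) :
    hf.matHom n X = ∑ i : Fin n, ∑ j : Fin n, f i j (X i j) := rfl

/-- Compressing `∑ f i j (X i j)` by `f k k b` on the left and `f l l c` on the right isolates the
entry `b * X k l * c`. -/
lemma matHom_injective (hf : IsMatrixSystem f) (n : ℕ) : Function.Injective (hf.matHom n) := by
  rw [injective_iff_map_eq_zero]
  intro X hX
  ext k l
  have key : ∀ b c : B, b * X k l * c = 0 := by
    intro b c
    apply hf.inj k l
    have h : f k k b * hf.matHom n X * f l l c = f k l (b * X k l * c) := by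
      simp only [matHom_apply, Finset.mul_sum, Finset.sum_mul, hf.mul, Fin.val_inj, ite_mul,
        zero_mul]
      simp
    rw [← h, hX]; simp
  have h1 := key (star (X k l)) (star (X k l) * X k l)
  have h2 : star (X k l) * X k l = 0 := by
    rw [← CStarRing.star_mul_self_eq_zero_iff]
    simpa using h1
  simpa using h2

/-- The norm on matrices over `B` needs an order on `B`. The order is chosen inside the proof; the
statement itself does not mention the matrix norm. -/
lemma norm_matHom_eq (hf : IsMatrixSystem f) (hf' : IsMatrixSystem f') (n : ℕ)
    (X : CStarMatrix (Fin n) (Fin n) B) : ‖hf.matHom n X‖ = ‖hf'.matHom n X‖ := by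
  let _ := CStarAlgebra.spectralOrder B
  let _ := CStarAlgebra.spectralOrderedRing B
  rw [NonUnitalStarAlgHom.norm_map _ (hf.matHom_injective n) X,
    NonUnitalStarAlgHom.norm_map _ (hf'.matHom_injective n) X]

/-- The map `v ↦ ∑ f i j (v (i, j))` on finitely supported families; its range is the linear span
of all the elements `f i j b`. -/
def sumMap (f : ℕ → ℕ → B →ₗ[ℂ] S) : (ℕ × ℕ →₀ B) →ₗ[ℂ] S :=
  Finsupp.lsum ℂ fun p => f p.1 p.2

@[simp] lemma sumMap_single (f : ℕ → ℕ → B →ₗ[ℂ] S) (p : ℕ × ℕ) (b : B) :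
    sumMap f (Finsupp.single p b) = f p.1 p.2 b := by
  simp [sumMap]

lemma sumMap_eq_matHom (hf : IsMatrixSystem f) (v : ℕ × ℕ →₀ B) (n : ℕ)
    (hv : v.support ⊆ Finset.range n ×ˢ Finset.range n) :
    sumMap f v = hf.matHom n (CStarMatrix.ofMatrix fun i j => v ((i : ℕ), (j : ℕ))) := by
  rw [sumMap, Finsupp.lsum_apply, Finsupp.sum_of_support_subset v hv _ (by simp),
    Finset.sum_product, matHom_apply]
  simp only [Finset.sum_range]
  rfl

lemma norm_sumMap_eq (hf : IsMatrixSystem f) (hf' : IsMatrixSystem f') (v : ℕ × ℕ →₀ B) :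
    ‖sumMap f v‖ = ‖sumMap f' v‖ := by
  obtain ⟨n, hn⟩ : ∃ n, v.support ⊆ Finset.range n ×ˢ Finset.range n := by
    refine ⟨(v.support.sup fun p => max p.1 p.2) + 1, fun p hp => ?_⟩
    have := Finset.le_sup (f := fun p : ℕ × ℕ => max p.1 p.2) hp
    simp only [Finset.mem_product, Finset.mem_range]
    grind
  rw [sumMap_eq_matHom hf v n hn, sumMap_eq_matHom hf' v n hn, norm_matHom_eq hf hf']

/-- The pairs `(∑ f i j (v (i, j)), ∑ f' i j (v (i, j)))`: the graph of the algebraic isomorphism between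
the spans of two matrix systems. -/
def graph (hf : IsMatrixSystem f) (hf' : IsMatrixSystem f') :
    NonUnitalStarSubalgebra ℂ (S × S') where
  carrier := {x | ∃ v, x = (sumMap f v, sumMap f' v)}
  add_mem' := by
    rintro _ _ ⟨v, rfl⟩ ⟨w, rfl⟩
    exact ⟨v + w, by simp⟩
  zero_mem' := ⟨0, by simp; rfl⟩
  smul_mem' := by
    rintro c _ ⟨v, rfl⟩
    exact ⟨c • v, by simp⟩
  mul_mem' := by
    rintro _ _ ⟨v, rfl⟩ ⟨w, rfl⟩
    induction v using Finsupp.induction_linear with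
    | zero => exact ⟨0, by simp⟩
    | add v₁ v₂ h₁ h₂ =>
      obtain ⟨u₁, h₁⟩ := h₁
      obtain ⟨u₂, h₂⟩ := h₂
      refine ⟨u₁ + u₂, ?_⟩
      simp only [Prod.mk_mul_mk, Prod.mk.injEq] at h₁ h₂
      simp [add_mul, h₁, h₂]
    | single p b =>
      induction w using Finsupp.induction_linear with
      | zero => exact ⟨0, by simp⟩
      | add v₁ v₂ h₁ h₂ =>
        obtain ⟨u₁, h₁⟩ := h₁
        obtain ⟨u₂, h₂⟩ := h₂
        refine ⟨u₁ + u₂, ?_⟩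
        simp only [Prod.mk_mul_mk, Prod.mk.injEq] at h₁ h₂
        simp only [sumMap_single] at h₁ h₂
        simp [mul_add, h₁, h₂]
      | single q c =>
        by_cases h : p.2 = q.1
        · refine ⟨Finsupp.single (p.1, q.2) (b * c), ?_⟩
          rw [sumMap_single f (p.1, q.2), sumMap_single f' (p.1, q.2)]
          simp [hf.mul, hf'.mul, h]
        · exact ⟨0, by simp [hf.mul, hf'.mul, h]⟩
  star_mem' := by
    rintro _ ⟨v, rfl⟩
    induction v using Finsupp.induction_linear with
    | zero => exact ⟨0, by simp [Prod.star_def]⟩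
    | add v₁ v₂ h₁ h₂ =>
      obtain ⟨u₁, h₁⟩ := h₁
      obtain ⟨u₂, h₂⟩ := h₂
      refine ⟨u₁ + u₂, ?_⟩
      simp only [Prod.star_def, Prod.mk.injEq] at h₁ h₂
      simp [Prod.star_def, h₁, h₂]
    | single p b =>
      exact ⟨Finsupp.single (p.2, p.1) (star b), by simp [Prod.star_def, hf.star_eq, hf'.star_eq]⟩

/-- An isometric homomorphism from a complete algebra with dense range is bijective. -/
lemma bijective_of_isometry {D : Type*} [NonUnitalCStarAlgebra D] (p : D →⋆ₙₐ[ℂ] S)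
    (hp : ∀ x, ‖p x‖ = ‖x‖) (hd : DenseRange p) : Function.Bijective p := by
  have hi : Isometry p := AddMonoidHomClass.isometry_of_norm p hp
  refine ⟨hi.injective, fun s => ?_⟩
  have := hi.isClosedEmbedding.isClosed_range.closure_eq
  rw [hd.closure_range] at this
  have h : s ∈ Set.range p := this ▸ Set.mem_univ s
  exact h

/-- The isomorphism theorem for matrix systems: the closure of the graph is a C⋆-algebra whose two
coordinate projections are isometric with dense range, hence isomorphisms. -/
theorem exists_starAlgEquiv (hf : IsMatrixSystem f) (hf' : IsMatrixSystem f')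
    (hd : DenseRange (sumMap f)) (hd' : DenseRange (sumMap f')) :
    ∃ θ : S ≃⋆ₐ[ℂ] S', Continuous θ ∧ ∀ i j b, θ (f i j b) = f' i j b := by
  let D := (graph hf hf').topologicalClosure
  have hDc : IsClosed (D : Set (S × S')) := (graph hf hf').isClosed_topologicalClosure
  let _ : NonUnitalCStarAlgebra D := NonUnitalStarSubalgebra.nonUnitalCStarAlgebra D
  have hnorm : ∀ x ∈ D, ‖x.1‖ = ‖x.2‖ := by
    have hc : IsClosed {x : S × S' | ‖x.1‖ = ‖x.2‖} :=
      isClosed_eq (by fun_prop) (by fun_prop)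
    refine fun x hx => closure_minimal ?_ hc hx
    rintro _ ⟨v, rfl⟩
    exact norm_sumMap_eq hf hf' v
  have hmem : ∀ v, (sumMap f v, sumMap f' v) ∈ D := fun v =>
    (graph hf hf').le_topologicalClosure ⟨v, rfl⟩
  let p : D →⋆ₙₐ[ℂ] S := (NonUnitalStarAlgHom.fst ℂ S S').comp
    (NonUnitalStarSubalgebraClass.subtype D)
  let q : D →⋆ₙₐ[ℂ] S' := (NonUnitalStarAlgHom.snd ℂ S S').comp
    (NonUnitalStarSubalgebraClass.subtype D)
  have hpn : ∀ x, ‖p x‖ = ‖x‖ := fun x => by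
    change ‖x.1.1‖ = max ‖x.1.1‖ ‖x.1.2‖
    rw [← hnorm x.1 x.2, max_self]
  have hqn : ∀ x, ‖q x‖ = ‖x‖ := fun x => by
    change ‖x.1.2‖ = max ‖x.1.1‖ ‖x.1.2‖
    rw [hnorm x.1 x.2, max_self]
  have hp : Function.Bijective p := bijective_of_isometry p hpn <| hd.mono <| by
    rintro _ ⟨v, rfl⟩
    exact ⟨⟨_, hmem v⟩, rfl⟩
  have hq : Function.Bijective q := bijective_of_isometry q hqn <| hd'.mono <| by
    rintro _ ⟨v, rfl⟩
    exact ⟨⟨_, hmem v⟩, rfl⟩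
  refine ⟨(StarAlgEquiv.ofBijective p hp).symm.trans (StarAlgEquiv.ofBijective q hq), ?_, ?_⟩
  · exact (StarAlgEquiv.isometry _).continuous
  · intro i j b
    have h := hmem (Finsupp.single (i, j) b)
    simp only [sumMap_single] at h
    have h1 : (StarAlgEquiv.ofBijective p hp).symm (f i j b) = ⟨_, h⟩ := by
      rw [StarAlgEquiv.symm_apply_eq]; rfl
    rw [StarAlgEquiv.trans_apply, h1]
    rfl

end IsMatrixSystem

/-! ### Multipliers -/

namespace DoubleCentralizer

variable {A : Type*} [NonUnitalCStarAlgebra A]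

lemma fst_mul (m : 𝓜(ℂ, A)) (y z : A) : m.fst (y * z) = m.fst y * z := by
  have h : ∀ w, w * (m.fst (y * z) - m.fst y * z) = 0 := fun w => by
    rw [mul_sub, ← m.central, ← mul_assoc, ← mul_assoc, ← m.central, sub_self]
  exact sub_eq_zero.1 (CStarRing.star_mul_self_eq_zero_iff _ |>.1 (h (star _)))

lemma snd_mul (m : 𝓜(ℂ, A)) (y z : A) : m.snd (y * z) = y * m.snd z := by
  have h : ∀ w, (m.snd (y * z) - y * m.snd z) * w = 0 := fun w => by
    rw [sub_mul, m.central, mul_assoc, mul_assoc, m.central, sub_self]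
  exact sub_eq_zero.1 (CStarRing.mul_star_self_eq_zero_iff _ |>.1 (h (star _)))

lemma mul_coe_eq (m : 𝓜(ℂ, A)) (y : A) : m * (y : 𝓜(ℂ, A)) = ((m.fst y : A) : 𝓜(ℂ, A)) := by
  ext z
  · simp [fst_mul]
  · simp [m.central]

lemma coe_mul_eq (m : 𝓜(ℂ, A)) (y : A) : (y : 𝓜(ℂ, A)) * m = ((m.snd y : A) : 𝓜(ℂ, A)) := by
  ext z
  · simp [m.central]
  · simp [snd_mul]

lemma coe_eq_coeHom (y : A) : (y : 𝓜(ℂ, A)) = DoubleCentralizer.coeHom (𝕜 := ℂ) y := rfl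

lemma coeHom_injective : Function.Injective (DoubleCentralizer.coeHom (𝕜 := ℂ) (A := A)) := by
  rw [injective_iff_map_eq_zero]
  intro a ha
  have h : (a : 𝓜(ℂ, A)).fst (star a) = 0 := by
    rw [coe_eq_coeHom, ha]; rfl
  simpa using h

lemma norm_coe (y : A) : ‖(y : 𝓜(ℂ, A))‖ = ‖y‖ :=
  NonUnitalStarAlgHom.norm_map (DoubleCentralizer.coeHom (𝕜 := ℂ)) coeHom_injective y

lemma isometry_coeHom : Isometry (DoubleCentralizer.coeHom (𝕜 := ℂ) (A := A)) :=
  NonUnitalStarAlgHom.isometry (DoubleCentralizer.coeHom (𝕜 := ℂ)) coeHom_injective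

lemma eq_of_forall_mul_coe {m m' : 𝓜(ℂ, A)}
    (h : ∀ y : A, m * (y : 𝓜(ℂ, A)) = m' * (y : 𝓜(ℂ, A))) : m = m' := by
  have : ‖m - m'‖ = 0 := by
    rw [← norm_fst]
    rw [norm_eq_zero]
    ext y
    have := h y
    rw [mul_coe_eq, mul_coe_eq, coe_eq_coeHom, coe_eq_coeHom] at this
    simpa [sub_eq_zero] using coeHom_injective this
  exact sub_eq_zero.1 (norm_eq_zero.1 this)

/-- If the left and the right actions of a sequence of multipliers are pointwise Cauchy, then their
limits define a multiplier; the limit maps are bounded by the Banach–Steinhaus theorem. -/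
lemma exists_strict_limit (s : ℕ → 𝓜(ℂ, A)) (hl : ∀ y, CauchySeq fun n => (s n).fst y)
    (hr : ∀ y, CauchySeq fun n => (s n).snd y) :
    ∃ c : 𝓜(ℂ, A), ∀ y, Filter.Tendsto (fun n => (s n).fst y) Filter.atTop (nhds (c.fst y)) := by
  choose L hL using fun y => cauchySeq_tendsto_of_complete (hl y)
  choose R hR using fun y => cauchySeq_tendsto_of_complete (hr y)
  refine ⟨⟨(continuousLinearMapOfTendsto (fun n => (s n).fst) (tendsto_pi_nhds.2 hL),
    continuousLinearMapOfTendsto (fun n => (s n).snd) (tendsto_pi_nhds.2 hR)), fun x y => ?_⟩, hL⟩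
  have h1 := (hR x).mul_const y
  have h2 := (hL y).const_mul x
  simp only [(s _).central] at h1
  exact tendsto_nhds_unique h1 h2

end DoubleCentralizer

open Filter Topology

/-! ### Matrix units in the multiplier algebra -/

/-- Matrix units in `M(A)` acting nondegenerately on `A`. -/
structure IsMultiplierMatrixUnits {A : Type*} [NonUnitalCStarAlgebra A]
    (E : ℕ → ℕ → 𝓜(ℂ, A)) : Prop where
  mul : ∀ i j k l, E i j * E k l = if j = k then E i l else 0
  star_eq : ∀ i j, star (E i j) = E j i
  nondeg : ∀ y : A, (y : 𝓜(ℂ, A)) ∈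
    closure (Submodule.span ℂ {x : 𝓜(ℂ, A) | ∃ i j, ∃ b : A, x = E i j * b} : Set 𝓜(ℂ, A))

namespace IsMultiplierMatrixUnits

variable {A : Type*} [NonUnitalCStarAlgebra A] {E : ℕ → ℕ → 𝓜(ℂ, A)}

/-- The projection `∑_{i < n} E i i`. -/
def proj (E : ℕ → ℕ → 𝓜(ℂ, A)) (n : ℕ) : 𝓜(ℂ, A) := ∑ i ∈ Finset.range n, E i i

lemma proj_mul (hE : IsMultiplierMatrixUnits E) (n i j : ℕ) :
    proj E n * E i j = if i < n then E i j else 0 := by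
  simp [proj, Finset.sum_mul, hE.mul]

lemma mul_proj (hE : IsMultiplierMatrixUnits E) (n i j : ℕ) :
    E i j * proj E n = if j < n then E i j else 0 := by
  simp [proj, Finset.mul_sum, hE.mul]

lemma star_proj (hE : IsMultiplierMatrixUnits E) (n : ℕ) : star (proj E n) = proj E n := by
  simp [proj, hE.star_eq]

lemma norm_proj_le (hE : IsMultiplierMatrixUnits E) (n : ℕ) : ‖proj E n‖ ≤ 1 := by
  have h : star (proj E n) * proj E n = proj E n := by
    rw [hE.star_proj]
    nth_rw 2 3 [proj]
    rw [Finset.mul_sum]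
    refine Finset.sum_congr rfl fun i hi => ?_
    rw [hE.proj_mul, if_pos (Finset.mem_range.1 hi)]
  have h2 := CStarRing.norm_star_mul_self (x := proj E n)
  rw [h] at h2
  nlinarith [norm_nonneg (proj E n)]

/-- Strict convergence `∑_{i < n} E i i → 1`. -/
lemma tendsto_proj_mul (hE : IsMultiplierMatrixUnits E) (y : A) :
    Tendsto (fun n => proj E n * (y : 𝓜(ℂ, A))) atTop (𝓝 (y : 𝓜(ℂ, A))) := by
  have hspan : ∀ x ∈ Submodule.span ℂ {x : 𝓜(ℂ, A) | ∃ i j, ∃ b : A, x = E i j * b},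
      Tendsto (fun n => proj E n * x) atTop (𝓝 x) := by
    intro x hx
    induction hx using Submodule.span_induction with
    | mem x hx =>
      obtain ⟨i, j, b, rfl⟩ := hx
      refine tendsto_const_nhds.congr' ?_
      filter_upwards [eventually_gt_atTop i] with n hn
      rw [← mul_assoc, hE.proj_mul, if_pos hn]
    | zero => simp
    | add x y _ _ hx hy => simpa [mul_add] using hx.add hy
    | smul c x _ hx => simpa using hx.const_smul c
  rw [Metric.tendsto_atTop]
  intro ε hε
  obtain ⟨x, hx, hxy⟩ := Metric.mem_closure_iff.1 (hE.nondeg y) (ε / 3) (by positivity)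
  obtain ⟨N, hN⟩ := Metric.tendsto_atTop.1 (hspan x hx) (ε / 3) (by positivity)
  refine ⟨N, fun n hn => ?_⟩
  have h1 : dist (proj E n * (y : 𝓜(ℂ, A))) (proj E n * x) ≤ dist (y : 𝓜(ℂ, A)) x := by
    rw [dist_eq_norm, dist_eq_norm, ← mul_sub]
    refine (norm_mul_le _ _).trans ?_
    exact mul_le_of_le_one_left (norm_nonneg _) (hE.norm_proj_le n)
  have h2 := hN n hn
  have h3 := dist_triangle4 (proj E n * (y : 𝓜(ℂ, A))) (proj E n * x) x y
  rw [dist_comm x] at h3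
  linarith

lemma tendsto_mul_proj (hE : IsMultiplierMatrixUnits E) (y : A) :
    Tendsto (fun n => (y : 𝓜(ℂ, A)) * proj E n) atTop (𝓝 (y : 𝓜(ℂ, A))) := by
  have h := (hE.tendsto_proj_mul (star y)).star
  have hs : star ((star y : A) : 𝓜(ℂ, A)) = y := by
    rw [DoubleCentralizer.coe_eq_coeHom, ← map_star, star_star]; rfl
  simpa [hE.star_proj, hs] using h

/-- The corner `E₀₀ M(A) E₀₀`. -/
def corner (hE : IsMultiplierMatrixUnits E) : NonUnitalStarSubalgebra ℂ 𝓜(ℂ, A) where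
  carrier := {x | E 0 0 * x = x ∧ x * E 0 0 = x}
  add_mem' := by rintro x y ⟨h1, h2⟩ ⟨h3, h4⟩; simp [mul_add, add_mul, *]
  zero_mem' := by simp
  smul_mem' := by rintro c x ⟨h1, h2⟩; simp [*]
  mul_mem' := by
    rintro x y ⟨h1, h2⟩ ⟨h3, h4⟩
    exact ⟨by rw [← mul_assoc, h1], by rw [mul_assoc, h4]⟩
  star_mem' := by
    rintro x ⟨h1, h2⟩
    constructor
    · simpa [hE.star_eq] using congrArg star h2
    · simpa [hE.star_eq] using congrArg star h1

lemma isClosed_corner (hE : IsMultiplierMatrixUnits E) : IsClosed (hE.corner : Set 𝓜(ℂ, A)) :=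
  (isClosed_eq (by fun_prop) (by fun_prop)).inter (isClosed_eq (by fun_prop) (by fun_prop))

/-- The amplification `∑_{k < n} E k 0 * x * E 0 k` of `x`: the diagonal matrix with `n` diagonal
entries `x`. -/
def amp (E : ℕ → ℕ → 𝓜(ℂ, A)) (x : 𝓜(ℂ, A)) (n : ℕ) : 𝓜(ℂ, A) :=
  ∑ k ∈ Finset.range n, E k 0 * x * E 0 k

/-- Amplification is a ⋆-homomorphism on the corner `E₀₀ M(A) E₀₀`, hence contractive. -/
lemma norm_amp_le (hE : IsMultiplierMatrixUnits E) {x : 𝓜(ℂ, A)} (hx : x ∈ hE.corner) (n : ℕ) :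
    ‖amp E x n‖ ≤ ‖x‖ := by
  have := hE.isClosed_corner
  let _ : NonUnitalCStarAlgebra hE.corner :=
    NonUnitalStarSubalgebra.nonUnitalCStarAlgebra hE.corner
  let φ : hE.corner →⋆ₙₐ[ℂ] 𝓜(ℂ, A) :=
    { toFun := fun x => amp E x n
      map_smul' := fun c x => by simp [amp, Finset.smul_sum]
      map_zero' := by simp [amp]
      map_add' := fun x y => by simp [amp, mul_add, add_mul, Finset.sum_add_distrib]
      map_mul' := fun x y => by
        simp only [amp, Finset.sum_mul_sum]
        refine Finset.sum_congr rfl fun k hk => ?_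
        have h : ∀ l, E k 0 * x * E 0 k * (E l 0 * y * E 0 l)
            = if k = l then E k 0 * (x * y) * E 0 l else 0 := by
          intro l
          calc _ = E k 0 * x * (E 0 k * E l 0) * y * E 0 l := by simp only [mul_assoc]
            _ = _ := by
              rw [hE.mul]
              split_ifs
              · rw [mul_assoc (E k 0) _ (E 0 0), x.2.2]; simp only [mul_assoc]
              · simp
        simp only [h, Finset.sum_ite_eq, hk, if_true]
        rfl
      map_star' := fun x => by simp [amp, hE.star_eq, mul_assoc] }
  have h := NonUnitalStarAlgHom.norm_apply_le φ ⟨x, hx⟩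
  exact h

lemma amp_mul (hE : IsMultiplierMatrixUnits E) (x : 𝓜(ℂ, A)) (n i j : ℕ) :
    amp E x n * E i j = if i < n then E i 0 * x * E 0 j else 0 := by
  simp [amp, Finset.sum_mul, mul_assoc, hE.mul]

lemma mul_amp (hE : IsMultiplierMatrixUnits E) (x : 𝓜(ℂ, A)) (n i j : ℕ) :
    E i j * amp E x n = if j < n then E i 0 * x * E 0 j else 0 := by
  simp [amp, Finset.mul_sum, ← mul_assoc, hE.mul]

lemma amp_mul_proj (hE : IsMultiplierMatrixUnits E) (x : 𝓜(ℂ, A)) {m n : ℕ} (h : m ≤ n) :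
    amp E x n * proj E m = amp E x m := by
  rw [proj, Finset.mul_sum, amp.eq_1 E x m]
  refine Finset.sum_congr rfl fun k hk => ?_
  rw [hE.amp_mul, if_pos ((Finset.mem_range.1 hk).trans_le h)]

lemma proj_mul_amp (hE : IsMultiplierMatrixUnits E) (x : 𝓜(ℂ, A)) {m n : ℕ} (h : m ≤ n) :
    proj E m * amp E x n = amp E x m := by
  rw [proj, Finset.sum_mul, amp.eq_1 E x m]
  refine Finset.sum_congr rfl fun k hk => ?_
  rw [hE.mul_amp, if_pos ((Finset.mem_range.1 hk).trans_le h)]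

/-- The infinite amplification `x ⊗ 1` of an element `x` of the corner: the finite amplifications of
`x` converge strictly to a multiplier `c`, which commutes with all matrix units. -/
lemma exists_amp (hE : IsMultiplierMatrixUnits E) {x : 𝓜(ℂ, A)} (hx : x ∈ hE.corner) :
    ∃ c : 𝓜(ℂ, A), ∀ i j, c * E i j = E i 0 * x * E 0 j ∧ E i j * c = E i 0 * x * E 0 j := by
  have hl : ∀ y, CauchySeq fun n => (amp E x n).fst y := by
    intro y
    refine cauchySeq_of_le_tendsto_0' (fun n => ‖x‖ * dist (y : 𝓜(ℂ, A)) (proj E n * y))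
      (fun m n hmn => ?_) ?_
    · rw [← DoubleCentralizer.isometry_coeHom.dist_eq, ← DoubleCentralizer.coe_eq_coeHom,
        ← DoubleCentralizer.coe_eq_coeHom, ← DoubleCentralizer.mul_coe_eq,
        ← DoubleCentralizer.mul_coe_eq, ← hE.amp_mul_proj x hmn, dist_comm, dist_eq_norm,
        dist_eq_norm, mul_assoc, ← mul_sub]
      exact (norm_mul_le _ _).trans (by gcongr; exact hE.norm_amp_le hx n)
    · simpa using ((tendsto_const_nhds (x := (y : 𝓜(ℂ, A)))).dist
        (hE.tendsto_proj_mul y)).const_mul ‖x‖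
  have hr : ∀ y, CauchySeq fun n => (amp E x n).snd y := by
    intro y
    refine cauchySeq_of_le_tendsto_0' (fun n => dist (y : 𝓜(ℂ, A)) (y * proj E n) * ‖x‖)
      (fun m n hmn => ?_) ?_
    · rw [← DoubleCentralizer.isometry_coeHom.dist_eq, ← DoubleCentralizer.coe_eq_coeHom,
        ← DoubleCentralizer.coe_eq_coeHom, ← DoubleCentralizer.coe_mul_eq,
        ← DoubleCentralizer.coe_mul_eq, ← hE.proj_mul_amp x hmn, dist_comm, dist_eq_norm,
        dist_eq_norm, ← mul_assoc, ← sub_mul]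
      exact (norm_mul_le _ _).trans (by gcongr; exact hE.norm_amp_le hx n)
    · simpa using ((tendsto_const_nhds (x := (y : 𝓜(ℂ, A)))).dist
        (hE.tendsto_mul_proj y)).mul_const ‖x‖
  obtain ⟨c, hc⟩ := DoubleCentralizer.exists_strict_limit _ hl hr
  have hc' : ∀ y : A, Tendsto (fun n => amp E x n * (y : 𝓜(ℂ, A))) atTop (𝓝 (c * y)) := by
    intro y
    simp only [DoubleCentralizer.mul_coe_eq]
    exact (DoubleCentralizer.isometry_coeHom.continuous.tendsto _).comp (hc y)
  refine ⟨c, fun i j => ⟨?_, ?_⟩⟩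
  · refine DoubleCentralizer.eq_of_forall_mul_coe fun y => ?_
    have h1 := hc' ((E i j).fst y)
    rw [← DoubleCentralizer.mul_coe_eq, ← mul_assoc] at h1
    refine tendsto_nhds_unique h1 (tendsto_const_nhds.congr' ?_)
    filter_upwards [eventually_gt_atTop i] with n hn
    rw [← mul_assoc, hE.amp_mul, if_pos hn]
  · refine DoubleCentralizer.eq_of_forall_mul_coe fun y => ?_
    have h1 := (hc' y).const_mul (E i j)
    rw [← mul_assoc] at h1
    refine tendsto_nhds_unique h1 (tendsto_const_nhds.congr' ?_)
    filter_upwards [eventually_gt_atTop j] with n hn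
    rw [← mul_assoc, hE.mul_amp, if_pos hn]

end IsMultiplierMatrixUnits

/-! ### The tensor product and the relative commutant as matrix systems -/

lemma MatrixUnits.mem_of_isClosed {K : Type*} [NonUnitalCStarAlgebra K] (u : MatrixUnits K)
    (V : Submodule ℂ K) (hV : IsClosed (V : Set K)) (h : ∀ i j, u.u i j ∈ V) (k : K) : k ∈ V := by
  refine closure_minimal (SetLike.coe_subset_coe.2 (Submodule.span_le.2 ?_)) hV (u.dense_span k)
  rintro _ ⟨p, rfl⟩
  exact h _ _

section Main

variable {K A C₀ T : Type*} [NonUnitalCStarAlgebra K] [NonUnitalCStarAlgebra A]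
  [NonUnitalCStarAlgebra C₀] [NonUnitalCStarAlgebra T]

lemma continuous_hom_s1 (ι : K →⋆ₙₐ[ℂ] 𝓜(ℂ, A)) : Continuous ι :=
  AddMonoidHomClass.continuous_of_bound ι 1 fun k => by
    simpa using NonUnitalStarAlgHom.norm_apply_le ι k

lemma isMultiplierMatrixUnits (u : MatrixUnits K) (ι : K →⋆ₙₐ[ℂ] 𝓜(ℂ, A))
    (hι : Nondegenerate ι) : IsMultiplierMatrixUnits fun i j => ι (u.u i j) where
  mul i j k l := by rw [← map_mul, u.u_mul]; split_ifs <;> simp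
  star_eq i j := by rw [← map_star, u.star_u]
  nondeg y := by
    set V := (Submodule.span ℂ
      {x : 𝓜(ℂ, A) | ∃ i j, ∃ b : A, x = ι (u.u i j) * b}).topologicalClosure with hVdef
    have hV : IsClosed (V : Set 𝓜(ℂ, A)) := Submodule.isClosed_topologicalClosure _
    refine closure_minimal (SetLike.coe_subset_coe.2 (Submodule.span_le.2 ?_)) hV (hι y)
    rintro _ ⟨k, b, rfl⟩
    have hcont : Continuous fun k => ι k * (b : 𝓜(ℂ, A)) :=
      (continuous_hom_s1 ι).mul continuous_const
    refine u.mem_of_isClosed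
      (V.comap ((LinearMap.mulRight ℂ (b : 𝓜(ℂ, A))).comp (ι : K →ₗ[ℂ] 𝓜(ℂ, A))))
      (hV.preimage hcont) (fun i j => ?_) k
    exact Submodule.le_topologicalClosure _ (Submodule.subset_span ⟨i, j, b, rfl⟩)

/-- The maps `c ↦ c ⊗ e i j` into the tensor product. -/
def tensorSystem (u : MatrixUnits K) (τ : CStarTensor C₀ K T) (i j : ℕ) : C₀ →ₗ[ℂ] T where
  toFun c := τ.tmul c (u.u i j)
  map_add' _ _ := τ.add_tmul _ _ _
  map_smul' _ _ := τ.smul_tmul _ _ _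

/-- The map `k ↦ c ⊗ k`. -/
def tmulRight (τ : CStarTensor C₀ K T) (c : C₀) : K →L[ℂ] T :=
  LinearMap.mkContinuous
    { toFun := fun k => τ.tmul c k
      map_add' := fun _ _ => τ.tmul_add _ _ _
      map_smul' := fun _ _ => τ.tmul_smul _ _ _ } ‖c‖ fun k => (τ.norm_tmul c k).le

lemma tmulRight_apply (τ : CStarTensor C₀ K T) (c : C₀) (k : K) :
    tmulRight τ c k = τ.tmul c k := rfl

lemma isMatrixSystem_tensorSystem (u : MatrixUnits K) (τ : CStarTensor C₀ K T) :
    IsMatrixSystem (tensorSystem u τ) where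
  mul i j k l b c := by
    change τ.tmul _ _ * τ.tmul _ _ = _
    rw [τ.tmul_mul_tmul, u.u_mul]
    split_ifs
    · rfl
    · exact map_zero (tmulRight τ (b * c))
  star_eq i j b := by
    change star (τ.tmul _ _) = τ.tmul _ _
    rw [τ.star_tmul, u.star_u]
  inj i j b h := by
    have h : ‖τ.tmul b (u.u i j)‖ = 0 := norm_eq_zero.2 h
    simpa [τ.norm_tmul, u.u_ne_zero] using h

lemma denseRange_tensorSystem (u : MatrixUnits K) (τ : CStarTensor C₀ K T) :
    DenseRange (IsMatrixSystem.sumMap (tensorSystem u τ)) := by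
  set V := (LinearMap.range (IsMatrixSystem.sumMap (tensorSystem u τ))).topologicalClosure
  have hV : IsClosed (V : Set T) := Submodule.isClosed_topologicalClosure _
  have hmem : ∀ c k, τ.tmul c k ∈ V := fun c k => by
    refine u.mem_of_isClosed (V.comap (tmulRight τ c : K →ₗ[ℂ] T))
      (hV.preimage (tmulRight τ c).continuous) (fun i j => ?_) k
    refine Submodule.le_topologicalClosure _ ⟨Finsupp.single (i, j) c, ?_⟩
    rw [IsMatrixSystem.sumMap_single]
    rfl
  intro t
  refine closure_minimal (SetLike.coe_subset_coe.2 (Submodule.span_le.2 ?_)) hV (τ.dense_span t)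
  rintro _ ⟨b, k, rfl⟩
  exact hmem b k

lemma coe_injective : Function.Injective ((↑) : A → 𝓜(ℂ, A)) :=
  DoubleCentralizer.coeHom_injective

/-- The multipliers `j c * ι (e i k)` lie in `A`, so that `c ↦ j c * ι (e i k)` is a linear map
into `A`. -/
lemma exists_commSystem (u : MatrixUnits K) (ι : K →⋆ₙₐ[ℂ] 𝓜(ℂ, A)) (j : C₀ →⋆ₙₐ[ℂ] 𝓜(ℂ, A))
    (hj : ∀ c, j c ∈ relComm ι) :
    ∃ f : ℕ → ℕ → C₀ →ₗ[ℂ] A, ∀ i k c, (f i k c : 𝓜(ℂ, A)) = j c * ι (u.u i k) := by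
  choose g hg using fun (i k : ℕ) (c : C₀) => (hj c (u.u i k)).2
  refine ⟨fun i k => ⟨⟨g i k, fun b c => ?_⟩, fun z c => ?_⟩, hg⟩
  · apply coe_injective
    have h : ((g i k b + g i k c : A) : 𝓜(ℂ, A)) = (g i k b : 𝓜(ℂ, A)) + (g i k c : 𝓜(ℂ, A)) :=
      map_add (DoubleCentralizer.coeHom (𝕜 := ℂ) (A := A)) _ _
    rw [h, hg, hg, hg, map_add, add_mul]
  · apply coe_injective
    have h : ((z • g i k c : A) : 𝓜(ℂ, A)) = z • (g i k c : 𝓜(ℂ, A)) :=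
      map_smul (DoubleCentralizer.coeHom (𝕜 := ℂ) (A := A)) _ _
    rw [RingHom.id_apply, h, hg, hg, map_smul, smul_mul_assoc]

variable {u : MatrixUnits K} {ι : K →⋆ₙₐ[ℂ] 𝓜(ℂ, A)} {j : C₀ →⋆ₙₐ[ℂ] 𝓜(ℂ, A)}
  {f : ℕ → ℕ → C₀ →ₗ[ℂ] A}

lemma isMatrixSystem_commSystem (hι : Nondegenerate ι) (hj_inj : Function.Injective j)
    (hj : ∀ c, j c ∈ relComm ι) (hf : ∀ i k c, (f i k c : 𝓜(ℂ, A)) = j c * ι (u.u i k)) :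
    IsMatrixSystem f := by
  have hE := isMultiplierMatrixUnits u ι hι
  have hmul := hE.mul
  have hnd := hE.nondeg
  refine ⟨fun i k l m b c => ?_, fun i k b => ?_, fun i k b h => ?_⟩
  · apply coe_injective
    rw [DoubleCentralizer.coe_eq_coeHom, map_mul, ← DoubleCentralizer.coe_eq_coeHom,
      ← DoubleCentralizer.coe_eq_coeHom, hf, hf, mul_assoc, ← mul_assoc (ι _) (j c),
      (hj c _).1, mul_assoc (j c), hmul]
    split_ifs
    · rw [hf, map_mul, mul_assoc]
    · rw [mul_zero, mul_zero]
      exact (map_zero (DoubleCentralizer.coeHom (𝕜 := ℂ) (A := A))).symm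
  · apply coe_injective
    rw [hf, DoubleCentralizer.coe_eq_coeHom, map_star, ← DoubleCentralizer.coe_eq_coeHom, hf,
      star_mul, hE.star_eq, ← map_star, (hj _ _).1]
  · have h0 : j b * ι (u.u i k) = 0 := by
      rw [← hf, h, DoubleCentralizer.coe_eq_coeHom, map_zero]
    have h1 : ∀ l m, j b * ι (u.u l m) = 0 := fun l m => by
      -- `E l m` factors through `E i k`, and `j b` commutes with the left factor.
      have h2 : ι (u.u l m) = ι (u.u l i) * (ι (u.u i k) * ι (u.u k m)) := by
        rw [hmul, if_pos rfl, hmul, if_pos rfl]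
      rw [h2, ← mul_assoc, ← (hj b _).1, mul_assoc, ← mul_assoc (j b), h0, zero_mul, mul_zero]
    have h3 : j b = 0 := DoubleCentralizer.eq_of_forall_mul_coe fun y => by
      rw [zero_mul]
      have hc : IsClosed ((LinearMap.ker (LinearMap.mulLeft ℂ (j b)) : Submodule ℂ 𝓜(ℂ, A)) :
          Set 𝓜(ℂ, A)) :=
        isClosed_eq (f := fun x => j b * x) (g := fun _ => 0) (by fun_prop) continuous_const
      refine closure_minimal (SetLike.coe_subset_coe.2 (Submodule.span_le.2 ?_)) hc (hnd y)
      rintro _ ⟨l, m, a, rfl⟩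
      change j b * (_ * _) = 0
      rw [← mul_assoc, h1, zero_mul]
    exact hj_inj (h3.trans (map_zero j).symm)

/-- Every corner `ι(e l l) a ι(e m m)` is of the form `c · ι(e l m)` with `c` in the relative
commutant: one takes for `c` the infinite amplification of `ι(e 0 l) a ι(e m 0)`. -/
lemma exists_relComm_mul_eq (u : MatrixUnits K) (hι : Nondegenerate ι) (a : A) (l m : ℕ) :
    ∃ c ∈ relComm ι, c * ι (u.u l m) = ι (u.u l l) * a * ι (u.u m m) := by
  have hE := isMultiplierMatrixUnits u ι hι
  have hmul := hE.mul
  have hrange : ∀ (p q : 𝓜(ℂ, A)) (b : A), ∃ b' : A, (b' : 𝓜(ℂ, A)) = p * b * q :=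
    fun p q b => ⟨_, by rw [DoubleCentralizer.mul_coe_eq, DoubleCentralizer.coe_mul_eq]⟩
  obtain ⟨x, hx⟩ := hrange (ι (u.u 0 l)) (ι (u.u m 0)) a
  have hxc : (x : 𝓜(ℂ, A)) ∈ hE.corner := by
    constructor
    · rw [hx, ← mul_assoc, ← mul_assoc, hmul, if_pos rfl]
    · rw [hx, mul_assoc, hmul, if_pos rfl]
  obtain ⟨c, hc⟩ := hE.exists_amp hxc
  refine ⟨c, ?_, ?_⟩
  · have hcl : IsClosed {y : 𝓜(ℂ, A) | y ∈ Set.range ((↑) : A → 𝓜(ℂ, A))} :=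
      DoubleCentralizer.isometry_coeHom.isClosedEmbedding.isClosed_range
    let W : Submodule ℂ 𝓜(ℂ, A) :=
      LinearMap.range (DoubleCentralizer.coeHom (𝕜 := ℂ) (A := A) : A →ₗ[ℂ] 𝓜(ℂ, A))
    have hι' := continuous_hom_s1 ι
    intro k
    refine ⟨?_, ?_⟩
    · refine u.mem_of_isClosed (LinearMap.eqLocus
        ((LinearMap.mulRight ℂ c).comp (ι : K →ₗ[ℂ] 𝓜(ℂ, A)))
        ((LinearMap.mulLeft ℂ c).comp (ι : K →ₗ[ℂ] 𝓜(ℂ, A)))) ?_ ?_ k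
      · exact isClosed_eq (f := fun k => ι k * c) (g := fun k => c * ι k) (by fun_prop)
          (by fun_prop)
      · intro i k
        exact (hc i k).2.trans (hc i k).1.symm
    · refine u.mem_of_isClosed (W.comap
        ((LinearMap.mulLeft ℂ c).comp (ι : K →ₗ[ℂ] 𝓜(ℂ, A)))) ?_ ?_ k
      · exact hcl.preimage (f := fun k => c * ι k) (by fun_prop)
      · intro i k
        obtain ⟨b, hb⟩ := hrange (ι (u.u i 0)) (ι (u.u 0 k)) x
        exact ⟨b, hb.trans (hc i k).1.symm⟩
  · rw [(hc l m).1, hx]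
    have h1 := hmul l 0 0 l
    have h2 := hmul m 0 0 m
    rw [if_pos rfl] at h1 h2
    rw [← h1, ← h2]
    simp only [mul_assoc]

/-- By strict convergence `∑_{i < n} E i i → 1`, each `y : A` is a limit of limits of finite sums of
the elements `E l l * y * E m m`, where `E i j = ι (e i j)`. -/
lemma denseRange_commSystem (hι : Nondegenerate ι) (hj_range : Set.range j = relComm ι)
    (hf : ∀ i k c, (f i k c : 𝓜(ℂ, A)) = j c * ι (u.u i k)) :
    DenseRange (IsMatrixSystem.sumMap f) := by
  have hE := isMultiplierMatrixUnits u ι hι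
  let κ : A →ₗ[ℂ] 𝓜(ℂ, A) := (DoubleCentralizer.coeHom (𝕜 := ℂ) (A := A) : A →ₗ[ℂ] 𝓜(ℂ, A))
  let V := ((LinearMap.range (IsMatrixSystem.sumMap f)).map κ).topologicalClosure
  have hV : IsClosed (V : Set 𝓜(ℂ, A)) := Submodule.isClosed_topologicalClosure _
  intro y
  suffices h : (y : 𝓜(ℂ, A)) ∈ V by
    rw [DoubleCentralizer.isometry_coeHom.isUniformInducing.isInducing
      |>.closure_eq_preimage_closure_image]
    exact h
  let P := IsMultiplierMatrixUnits.proj fun i j => ι (u.u i j)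
  have h1 : ∀ n m, P n * y * P m ∈ V := by
    intro n m
    simp only [P, IsMultiplierMatrixUnits.proj, Finset.sum_mul, Finset.mul_sum]
    refine V.sum_mem fun l _ => V.sum_mem fun i _ => ?_
    obtain ⟨c, hc, h⟩ := exists_relComm_mul_eq u hι y i l
    rw [← hj_range] at hc
    obtain ⟨c, rfl⟩ := hc
    refine Submodule.le_topologicalClosure _ ⟨f i l c,
      ⟨Finsupp.single (i, l) c, IsMatrixSystem.sumMap_single _ _ _⟩, ?_⟩
    exact (hf i l c).trans h
  have h2 : ∀ m, (y : 𝓜(ℂ, A)) * P m ∈ V := fun m =>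
    hV.mem_of_tendsto ((hE.tendsto_proj_mul y).mul_const (P m)) 
      (Eventually.of_forall fun n => h1 n m)
  exact hV.mem_of_tendsto (hE.tendsto_mul_proj y) (Eventually.of_forall h2)

end Main

/-- If `(A, ι)` is a `𝒦`-algebra, then there is a C⋆-isomorphism
`θ : C(A, ι) ⊗ 𝒦 ≅ A` determined on elementary tensors by `θ(a ⊗ k) = a·ι(k)`.
Here `C₀` is an abstract copy of the relative commutant `C(A, ι)` (via the injective
homomorphism `j` with range `C(A, ι)`), and `T` is a spatial tensor product `C₀ ⊗ K`. -/
theorem exists_starAlgEquiv_relComm_tensor_compacts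
    {K A C₀ T : Type*} [NonUnitalCStarAlgebra K] [NonUnitalCStarAlgebra A]
    [NonUnitalCStarAlgebra C₀] [NonUnitalCStarAlgebra T]
    (hK : IsCompactOperatorsAlgebra K)
    (ι : K →⋆ₙₐ[ℂ] 𝓜(ℂ, A)) (hι : Nondegenerate ι)
    (j : C₀ →⋆ₙₐ[ℂ] 𝓜(ℂ, A)) (hj_inj : Function.Injective j)
    (hj_range : Set.range j = relComm ι)
    (τ : CStarTensor C₀ K T) :
    ∃ θ : T ≃⋆ₐ[ℂ] A, ∀ (c : C₀) (k : K),
      ((θ (τ.tmul c k) : A) : 𝓜(ℂ, A)) = j c * ι k := by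
  obtain ⟨u⟩ := hK
  have hj : ∀ c, j c ∈ relComm ι := fun c => hj_range ▸ Set.mem_range_self c
  obtain ⟨f, hf⟩ := exists_commSystem u ι j hj
  obtain ⟨θ, hθ, h⟩ := (isMatrixSystem_tensorSystem u τ).exists_starAlgEquiv
    (isMatrixSystem_commSystem hι hj_inj hj hf) (denseRange_tensorSystem u τ)
    (denseRange_commSystem hι hj_range hf)
  refine ⟨θ, fun c k => ?_⟩
  have hι' := continuous_hom_s1 ι
  let F : K →ₗ[ℂ] 𝓜(ℂ, A) :=
    { toFun := fun k => DoubleCentralizer.coeHom (𝕜 := ℂ) (θ (tmulRight τ c k))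
      map_add' := fun _ _ => by simp only [map_add]
      map_smul' := fun _ _ => by simp only [map_smul, RingHom.id_apply] }
  have hF : Continuous F :=
    DoubleCentralizer.isometry_coeHom.continuous.comp (hθ.comp (tmulRight τ c).continuous)
  -- Both sides are continuous and linear in `k`, and they agree on matrix units.
  refine u.mem_of_isClosed (LinearMap.eqLocus F
    ((LinearMap.mulLeft ℂ (j c)).comp (ι : K →ₗ[ℂ] 𝓜(ℂ, A)))) ?_ ?_ k
  · exact isClosed_eq (f := F) (g := fun k => j c * ι k) hF (by fun_prop)
  · intro i l
    exact (congrArg ((↑) : A → 𝓜(ℂ, A)) (h i l c)).trans (hf i l c)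
end
end

section
/- If (A, ι) is a 𝒦-algebra, then ‖a·ι(k)‖ = ‖a‖·‖k‖ for all a ∈ C(A, ι) and all k ∈ 𝒦. -/
/-!
The argument reduces to a fixed matrix unit and then to columns of matrices.

Since `a` commutes with `ι(K)`, so does `star a`, and hence
`‖a ι(x)‖² = ‖star a * a * ι(star x * x)‖` depends only on `star x * x`
(`norm_mul_map_congr`).  Two consequences carry the proof.

* `‖a‖ = ‖a ι(u₀₀)‖` (`norm_le_norm_mul_map_unit`).  The elements `star a * a * ι(uᵢᵢ)` are
  self-adjoint and mutually orthogonal, so with `pₙ = ∑ i < n, uᵢᵢ` the norm of `a ι(pₙ)` is the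
  maximum of the `‖a ι(uᵢᵢ)‖`, none of which exceeds `‖a ι(u₀₀)‖`.  By nondegeneracy
  `ι(pₙ) b → b` for every `b` in `A`, so `‖a b‖ ≤ ‖a ι(u₀₀)‖ ‖b‖`.
* For `v ∈ ℂⁿ`, the column `col v = ∑ i, vᵢ uᵢ₀` satisfies `star (col v) * col v = ‖v‖² u₀₀`, so
  `‖a ι(col v)‖ = ‖v‖ ‖a‖`.

If `k = ∑ i j, Mᵢⱼ uᵢⱼ`, then `k * col v = col (M v)`, so
`‖a‖ ‖M v‖ = ‖a ι(k) ι(col v)‖ ≤ ‖a ι(k)‖ ‖v‖`, giving `‖a‖ ‖M‖ ≤ ‖a ι(k)‖` for the operator norm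
of `M`.  As the ⋆-homomorphism `M ↦ k` is contractive, `‖a‖ ‖k‖ ≤ ‖a ι(k)‖`.  The reverse
inequality is clear, and such `k` are dense.
-/

open scoped MultiplierAlgebra

noncomputable section

open Filter Topology
open scoped Matrix.Norms.L2Operator CStarAlgebra

/-! ### Preliminaries on convergence and on the multiplier algebra -/

/-- For a sequence `p` in the unit ball, the elements on which left multiplication by `p n` converges
to the identity form a closed set. -/
lemma tendsto_mul_of_mem_closure {B : Type*} [NonUnitalNormedRing B] {p : ℕ → B}
    (hp : ∀ n, ‖p n‖ ≤ 1) {S : Set B} (hS : ∀ x ∈ S, Tendsto (fun n => p n * x) atTop (𝓝 x))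
    {x : B} (hx : x ∈ closure S) : Tendsto (fun n => p n * x) atTop (𝓝 x) := by
  rw [Metric.tendsto_atTop]
  intro ε hε
  obtain ⟨y, hy, hxy⟩ := Metric.mem_closure_iff.1 hx (ε / 3) (by positivity)
  obtain ⟨N, hN⟩ := Metric.tendsto_atTop.1 (hS y hy) (ε / 3) (by positivity)
  refine ⟨N, fun n hn => ?_⟩
  have h1 : dist (p n * x) (p n * y) ≤ dist x y := by
    rw [dist_eq_norm, dist_eq_norm, ← mul_sub]
    calc _ ≤ ‖p n‖ * ‖x - y‖ := norm_mul_le _ _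
      _ ≤ 1 * ‖x - y‖ := by gcongr; exact hp n
      _ = _ := one_mul _
  have h2 := hN n hn
  have h3 := dist_triangle4 (p n * x) (p n * y) y x
  rw [dist_comm y x] at h3
  linarith

/-- The canonical embedding of `A` in `M(A)` is isometric. -/
lemma norm_coe_multiplier {A : Type*} [NonUnitalCStarAlgebra A] (b : A) :
    ‖(b : 𝓜(ℂ, A))‖ = ‖b‖ := by
  rw [← DoubleCentralizer.norm_fst, DoubleCentralizer.coe_fst,
    ContinuousLinearMap.opNorm_mul_apply]

lemma mul_coe_multiplier {A : Type*} [NonUnitalCStarAlgebra A] (a : 𝓜(ℂ, A)) (b : A) :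
    a * (b : 𝓜(ℂ, A)) = (a.fst b : A) := by
  refine DoubleCentralizer.ext _ _ _ _ (Prod.ext ?_ ?_)
  · ext c
    -- `a.fst` is a right module map because `a.snd` is adjoint to it.
    have key : ∀ z, z * a.fst (b * c) = z * (a.fst b * c) := fun z => by
      rw [← mul_assoc z, ← a.central, ← a.central, mul_assoc]
    change a.fst (b * c) = a.fst b * c
    have := key (star (a.fst (b * c) - a.fst b * c))
    rw [← sub_eq_zero, ← mul_sub, CStarRing.star_mul_self_eq_zero_iff, sub_eq_zero] at this
    exact this
  · ext c
    exact a.central c b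

/-! ### Matrix units, columns and matrices -/

namespace MatrixUnits

variable {K : Type*} [NonUnitalCStarAlgebra K] (m : MatrixUnits K)

/-- The projection `∑ i < n, uᵢᵢ`. -/
def proj (n : ℕ) : K := ∑ i ∈ Finset.range n, m.u i i

lemma star_proj (n : ℕ) : star (m.proj n) = m.proj n := by
  simp [proj, star_sum, m.star_u]

lemma proj_mul_unit (n i j : ℕ) (h : i < n) : m.proj n * m.u i j = m.u i j := by
  simp [proj, Finset.sum_mul, m.u_mul, h]

lemma proj_mul_self (n : ℕ) : m.proj n * m.proj n = m.proj n := by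
  change m.proj n * ∑ i ∈ Finset.range n, m.u i i = ∑ i ∈ Finset.range n, m.u i i
  rw [Finset.mul_sum]
  exact Finset.sum_congr rfl fun i hi => m.proj_mul_unit n i i (Finset.mem_range.1 hi)

/-- A self-adjoint idempotent has norm at most one. -/
lemma norm_le_one_of_proj {p : K} (h1 : star p = p) (h2 : p * p = p) : ‖p‖ ≤ 1 := by
  have := CStarRing.norm_star_mul_self (x := p)
  rw [h1, h2] at this
  by_contra! h
  nlinarith

lemma norm_proj_le (n : ℕ) : ‖m.proj n‖ ≤ 1 :=
  norm_le_one_of_proj (m.star_proj n) (m.proj_mul_self n)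

lemma norm_unit_le (i j : ℕ) : ‖m.u i j‖ ≤ 1 := by
  have h := CStarRing.norm_star_mul_self (x := m.u i j)
  have h1 : ‖m.u j j‖ ≤ 1 := norm_le_one_of_proj (m.star_u j j) (by simp [m.u_mul])
  rw [m.star_u, m.u_mul, if_pos rfl] at h
  by_contra! h2
  nlinarith

lemma tendsto_proj_mul (k : K) : Tendsto (fun n => m.proj n * k) atTop (𝓝 k) := by
  refine tendsto_mul_of_mem_closure m.norm_proj_le (fun x hx => ?_) (m.dense_span k)
  induction hx using Submodule.span_induction with
  | mem x h =>
    obtain ⟨⟨i, j⟩, rfl⟩ := h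
    refine tendsto_const_nhds.congr' ?_
    filter_upwards [eventually_gt_atTop i] with n hn
    exact (m.proj_mul_unit n i j hn).symm
  | zero => simp
  | add x y _ _ hx hy => simpa [mul_add] using hx.add hy
  | smul c x _ hx => simpa [mul_smul_comm] using hx.const_smul c

/-- The ⋆-homomorphism `M_n(ℂ) → K`, `M ↦ ∑ i j, Mᵢⱼ uᵢⱼ`. -/
def ofMatrix (n : ℕ) : Matrix (Fin n) (Fin n) ℂ →⋆ₙₐ[ℂ] K where
  toFun M := ∑ i, ∑ j, M i j • m.u i j
  map_smul' c M := by simp [Finset.smul_sum, mul_smul]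
  map_zero' := by simp
  map_add' M N := by simp [add_smul, Finset.sum_add_distrib]
  map_mul' M N := by
    rw [Finset.sum_mul]
    refine Finset.sum_congr rfl fun i _ => ?_
    simp only [Matrix.mul_apply, Finset.sum_smul]
    rw [Finset.sum_mul, Finset.sum_comm]
    refine Finset.sum_congr rfl fun k _ => ?_
    rw [Finset.sum_comm, Finset.mul_sum]
    refine Finset.sum_congr rfl fun j _ => ?_
    simp [Finset.mul_sum, smul_mul_smul_comm, m.u_mul, Fin.val_inj]
  map_star' M := by
    simp only [star_sum, star_smul, m.star_u, Matrix.star_apply]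
    exact Finset.sum_comm

lemma ofMatrix_apply (n : ℕ) (M : Matrix (Fin n) (Fin n) ℂ) :
    m.ofMatrix n M = ∑ i, ∑ j, M i j • m.u i j := rfl

/-- The column `∑ i, vᵢ uᵢ₀`: the copy of `ℂⁿ` in the left ideal `K u₀₀`. -/
def col {n : ℕ} (v : EuclideanSpace ℂ (Fin n)) : K := ∑ i, v i • m.u i 0

lemma star_col_mul_col {n : ℕ} (v : EuclideanSpace ℂ (Fin n)) :
    star (m.col v) * m.col v = star ((‖v‖ : ℂ) • m.u 0 0) * ((‖v‖ : ℂ) • m.u 0 0) := by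
  have h : ((‖v‖ : ℂ)) * ‖v‖ = ∑ i, star (v i) * v i := by
    rw [← Complex.ofReal_mul, ← sq, EuclideanSpace.norm_sq_eq]
    push_cast
    refine Finset.sum_congr rfl fun i _ => ?_
    rw [Complex.star_def, Complex.conj_mul']
  simp only [col, star_sum, star_smul, m.star_u, Finset.sum_mul_sum, smul_mul_smul_comm, m.u_mul,
    Fin.val_inj, smul_ite, smul_zero, Finset.sum_ite_eq, Finset.mem_univ, if_true]
  rw [← Finset.sum_smul, ← h]
  simp

lemma ofMatrix_mul_col {n : ℕ} (M : Matrix (Fin n) (Fin n) ℂ) (v : EuclideanSpace ℂ (Fin n)) :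
    m.ofMatrix n M * m.col v = m.col (Matrix.toEuclideanCLM (n := Fin n) (𝕜 := ℂ) M v) := by
  rw [ofMatrix_apply, col, col, Finset.sum_mul]
  refine Finset.sum_congr rfl fun i _ => ?_
  rw [Matrix.ofLp_toEuclideanCLM, Matrix.mulVec, dotProduct, Finset.sum_mul, Finset.sum_smul]
  refine Finset.sum_congr rfl fun j _ => ?_
  simp [Finset.mul_sum, smul_mul_smul_comm, m.u_mul, Fin.val_inj]

lemma exists_ofMatrix_eq {k : K}
    (hk : k ∈ Submodule.span ℂ (Set.range fun p : ℕ × ℕ => m.u p.1 p.2)) :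
    ∃ n M, m.ofMatrix n M = k := by
  obtain ⟨c, rfl⟩ := Finsupp.mem_span_range_iff_exists_finsupp.1 hk
  let n := c.support.sup (fun p => max p.1 p.2) + 1
  refine ⟨n, Matrix.of fun i j => c (i, j), ?_⟩
  have hsub : c.support ⊆ Finset.range n ×ˢ Finset.range n := fun p hp => by
    have := Finset.le_sup (f := fun p : ℕ × ℕ => max p.1 p.2) hp
    simp only [Finset.mem_product, Finset.mem_range]
    grind
  rw [Finsupp.sum, Finset.sum_subset hsub (fun p _ hp => by
    rw [Finsupp.notMem_support_iff.1 hp, zero_smul]), Finset.sum_product, ofMatrix_apply,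
    Finset.sum_range]
  exact Finset.sum_congr rfl fun i _ => by simp [Finset.sum_range]

end MatrixUnits

/-! ### Norms of elements commuting with the range of `ι` -/

section Commuting

variable {K B : Type*} [NonUnitalCStarAlgebra K] [CStarAlgebra B] (ι : K →⋆ₙₐ[ℂ] B) {a : B}

lemma star_mul_self_commute (ha : ∀ k, ι k * a = a * ι k) (k : K) :
    ι k * (star a * a) = star a * a * ι k := by
  have h : ι k * star a = star a * ι k := by
    have := congrArg star (ha (star k))
    simpa [map_star] using this.symm
  rw [← mul_assoc, h, mul_assoc, ha, ← mul_assoc]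

lemma norm_mul_map_sq (ha : ∀ k, ι k * a = a * ι k) (x : K) :
    ‖a * ι x‖ * ‖a * ι x‖ = ‖star a * a * ι (star x * x)‖ := by
  rw [← CStarRing.norm_star_mul_self, star_mul, map_mul, ← mul_assoc (star a * a),
    ← star_mul_self_commute ι ha, map_star]
  simp only [mul_assoc]

/-- For `a` commuting with the range of `ι`, the norm of `a ι(x)` depends only on `x⋆x`. -/
lemma norm_mul_map_congr (ha : ∀ k, ι k * a = a * ι k) {x y : K} (h : star x * x = star y * y) :
    ‖a * ι x‖ = ‖a * ι y‖ := by
  have h1 := norm_mul_map_sq ι ha x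
  rw [h, ← norm_mul_map_sq ι ha y] at h1
  exact (mul_self_inj (norm_nonneg _) (norm_nonneg _)).1 h1

lemma norm_mul_map_diag_le (m : MatrixUnits K) (ha : ∀ k, ι k * a = a * ι k) (i : ℕ) :
    ‖a * ι (m.u i i)‖ ≤ ‖a * ι (m.u 0 0)‖ := by
  have h1 : m.u i i = m.u i 0 * m.u 0 i := by simp [m.u_mul]
  have h2 : ‖a * ι (m.u i 0)‖ = ‖a * ι (m.u 0 0)‖ :=
    norm_mul_map_congr ι ha (by simp [m.star_u, m.u_mul])
  rw [h1, map_mul, ← mul_assoc, ← h2]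
  refine (norm_mul_le _ _).trans (mul_le_of_le_one_right (norm_nonneg _) ?_)
  exact (NonUnitalStarAlgHom.norm_apply_le ι _).trans (m.norm_unit_le _ _)

open scoped Function in
lemma norm_mul_map_proj_le (m : MatrixUnits K) (ha : ∀ k, ι k * a = a * ι k) (n : ℕ) :
    ‖a * ι (m.proj n)‖ ≤ ‖a * ι (m.u 0 0)‖ := by
  have hc := star_mul_self_commute ι ha
  have hsq : ∀ i, ‖star a * a * ι (m.u i i)‖ = ‖a * ι (m.u i i)‖ * ‖a * ι (m.u i i)‖ := fun i => by
    rw [norm_mul_map_sq ι ha, m.star_u, m.u_mul, if_pos rfl]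
  have hsa : ∀ i, IsSelfAdjoint (star a * a * ι (m.u i i)) := fun i => by
    rw [isSelfAdjoint_iff, star_mul, ← map_star, m.star_u, star_mul, star_star, hc]
  have horth : Pairwise ((· * · = 0) on fun i => star a * a * ι (m.u i i)) := fun i j hij => by
    change star a * a * ι (m.u i i) * (star a * a * ι (m.u j j)) = 0
    rw [← hc (m.u j j), mul_assoc (star a * a), ← mul_assoc (ι (m.u i i)), ← map_mul, m.u_mul,
      if_neg hij]
    simp
  have hsum := IsSelfAdjoint.nnnorm_sum_eq_sup (Finset.range n) (fun i _ => hsa i) horth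
  refine (mul_self_le_mul_self_iff (norm_nonneg _) (norm_nonneg _)).2 ?_
  rw [norm_mul_map_sq ι ha, m.star_proj, m.proj_mul_self, MatrixUnits.proj, map_sum,
    Finset.mul_sum, ← coe_nnnorm, hsum, ← coe_nnnorm, ← NNReal.coe_mul, NNReal.coe_le_coe]
  refine Finset.sup_le fun i _ => ?_
  rw [← NNReal.coe_le_coe, coe_nnnorm, hsq]
  exact mul_self_le_mul_self (norm_nonneg _) (norm_mul_map_diag_le ι m ha i)

lemma norm_mul_map_col (m : MatrixUnits K) (ha : ∀ k, ι k * a = a * ι k) {n : ℕ}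
    (v : EuclideanSpace ℂ (Fin n)) :
    ‖a * ι (m.col v)‖ = ‖v‖ * ‖a * ι (m.u 0 0)‖ := by
  rw [norm_mul_map_congr ι ha (m.star_col_mul_col v), map_smul, mul_smul_comm, norm_smul]
  simp

/-- Letting `ofMatrix n M` act on columns bounds the operator norm of `M`; contractivity of
`ofMatrix n` then gives the bound for the norm of its image in `K`. -/
lemma le_norm_mul_map_ofMatrix (m : MatrixUnits K) (ha : ∀ k, ι k * a = a * ι k) {n : ℕ}
    (M : Matrix (Fin n) (Fin n) ℂ) :
    ‖a * ι (m.u 0 0)‖ * ‖m.ofMatrix n M‖ ≤ ‖a * ι (m.ofMatrix n M)‖ := by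
  set r := ‖a * ι (m.u 0 0)‖ with hr
  rcases (norm_nonneg (a * ι (m.u 0 0))).eq_or_lt with h0 | h0
  · rw [hr, ← h0, zero_mul]; exact norm_nonneg _
  have hM : ‖M‖ ≤ ‖a * ι (m.ofMatrix n M)‖ / r := by
    rw [Matrix.cstar_norm_def]
    refine ContinuousLinearMap.opNorm_le_bound _ (by positivity) fun v => ?_
    rw [div_mul_eq_mul_div, le_div_iff₀ h0, ← norm_mul_map_col ι m ha, ← m.ofMatrix_mul_col,
      map_mul, ← mul_assoc]
    refine (norm_mul_le _ _).trans ?_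
    gcongr
    -- `‖col v‖ ≤ ‖v‖` by the C⋆-identity.
    refine (NonUnitalStarAlgHom.norm_apply_le ι _).trans ?_
    refine (mul_self_le_mul_self_iff (norm_nonneg _) (norm_nonneg _)).2 ?_
    rw [← CStarRing.norm_star_mul_self, m.star_col_mul_col, CStarRing.norm_star_mul_self, norm_smul]
    have := m.norm_unit_le 0 0
    have h : ‖(‖v‖ : ℂ)‖ * ‖m.u 0 0‖ ≤ ‖v‖ := by
      rw [Complex.norm_real, norm_norm]
      exact mul_le_of_le_one_right (norm_nonneg _) this
    exact mul_self_le_mul_self (by positivity) h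
  rw [mul_comm, ← le_div_iff₀ h0]
  exact (NonUnitalStarAlgHom.norm_apply_le (m.ofMatrix n) M).trans hM

end Commuting

/-! ### Nondegeneracy and the norm identity -/

/-- Nondegeneracy makes `ι(pₙ)` converge strictly to `1`, which yields `‖a‖ ≤ ‖a ι(u₀₀)‖`. -/
lemma norm_le_norm_mul_map_unit {K A : Type*} [NonUnitalCStarAlgebra K] [NonUnitalCStarAlgebra A]
    (m : MatrixUnits K) (ι : K →⋆ₙₐ[ℂ] 𝓜(ℂ, A)) (hι : Nondegenerate ι) {a : 𝓜(ℂ, A)}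
    (ha : ∀ k, ι k * a = a * ι k) : ‖a‖ ≤ ‖a * ι (m.u 0 0)‖ := by
  have hcont : Continuous ι := map_continuous ι
  rw [← DoubleCentralizer.norm_fst]
  refine ContinuousLinearMap.opNorm_le_bound _ (norm_nonneg _) fun b => ?_
  rw [← norm_coe_multiplier, ← mul_coe_multiplier, ← norm_coe_multiplier b]
  have hlim : Tendsto (fun n => ι (m.proj n) * (b : 𝓜(ℂ, A))) atTop (𝓝 (b : 𝓜(ℂ, A))) := by
    refine tendsto_mul_of_mem_closure (p := fun n => ι (m.proj n))
      (fun n => (NonUnitalStarAlgHom.norm_apply_le ι _).trans (m.norm_proj_le n))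
      (fun x hx => ?_) (hι b)
    induction hx using Submodule.span_induction with
    | mem x h =>
      obtain ⟨k, c, rfl⟩ := h
      simp only [← mul_assoc, ← map_mul]
      exact ((hcont.tendsto k).comp (m.tendsto_proj_mul k)).mul_const _
    | zero => simp
    | add x y _ _ hx hy => simpa [mul_add] using hx.add hy
    | smul c x _ hx => simpa [mul_smul_comm] using hx.const_smul c
  refine le_of_tendsto (hlim.const_mul a).norm (Eventually.of_forall fun n => ?_)
  rw [← mul_assoc]
  refine (norm_mul_le _ _).trans ?_
  gcongr
  exact norm_mul_map_proj_le ι m ha n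

/-- If `(A, ι)` is a `𝒦`-algebra, then `‖a·ι(k)‖ = ‖a‖·‖k‖` for all
`a ∈ C(A, ι)` and all `k ∈ 𝒦`. -/
theorem norm_mul_iota_of_mem_relComm
    {K A : Type*} [NonUnitalCStarAlgebra K] [NonUnitalCStarAlgebra A]
    (hK : IsCompactOperatorsAlgebra K)
    (ι : K →⋆ₙₐ[ℂ] 𝓜(ℂ, A)) (hι : Nondegenerate ι) :
    ∀ a ∈ relComm ι, ∀ k : K, ‖a * ι k‖ = ‖a‖ * ‖k‖ := by
  obtain ⟨m⟩ := hK
  intro a ha k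
  have hc : ∀ k, ι k * a = a * ι k := fun k => (ha k).1
  have hcont : Continuous ι := map_continuous ι
  refine le_antisymm ((norm_mul_le _ _).trans ?_) ?_
  · gcongr
    exact NonUnitalStarAlgHom.norm_apply_le ι k
  · have hclosed : IsClosed {k : K | ‖a‖ * ‖k‖ ≤ ‖a * ι k‖} :=
      isClosed_le (by fun_prop) (by fun_prop)
    refine closure_minimal (fun x hx => ?_) hclosed (m.dense_span k)
    obtain ⟨n, M, rfl⟩ := m.exists_ofMatrix_eq hx
    refine le_trans ?_ (le_norm_mul_map_ofMatrix ι m hc M)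
    gcongr
    exact norm_le_norm_mul_map_unit m ι hι hc
end
end
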